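/- Let G be a connected cubic graph (every vertex has degree exactly 3) that is traceable, i.e., G contains a Hamiltonian path. Then the edge set of G can be decomposed into a spanning tree of G, a matching, and a family of at most two vertex-disjoint cycles. -/

import Mathlib

/-- The conclusion, as a property of `G`. -/
def HOGood {V : Type*} (G : SimpleGraph V) : Prop :=
    ∃ (T M C : Set (Sym2 V)),
      T ∪ M ∪ C = G.edgeSet ∧
      Disjoint T M ∧ Disjoint T C ∧ Disjoint M C ∧
      (SimpleGraph.fromEdgeSet T).IsTree ∧
      M.Pairwise (fun e f => ∀ v : V, v ∈ e → v ∉ f) ∧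
      (∃ (ι : Type) (hι : Fintype ι) (x : ι → V)
          (w : ∀ i : ι, G.Walk (x i) (x i)),
        @Fintype.card ι hι ≤ 2 ∧
        (∀ i, (w i).IsCycle) ∧
        (Pairwise fun i j => ∀ v : V, v ∈ (w i).support → v ∉ (w j).support) ∧
        C = ⋃ i, {e : Sym2 V | e ∈ (w i).edges})

theorem ho_tree_of_par {V : Type*} [Fintype V] (r : V) (par : V → V) (rk : V → ℕ)
    (h : ∀ v, v ≠ r → rk (par v) < rk v) :
    (SimpleGraph.fromEdgeSet {e : Sym2 V | ∃ v, v ≠ r ∧ e = s(v, par v)}).IsTree := by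
  classical
  set H := SimpleGraph.fromEdgeSet {e : Sym2 V | ∃ v, v ≠ r ∧ e = s(v, par v)} with hH
  have hadj : ∀ v, v ≠ r → H.Adj v (par v) := by
    intro v hv
    rw [hH, SimpleGraph.fromEdgeSet_adj]
    refine ⟨⟨v, hv, rfl⟩, ?_⟩
    intro e
    have := h v hv
    rw [← e] at this
    omega
  have hreach : ∀ m v, rk v = m → H.Reachable v r := by
    intro m
    induction m using Nat.strong_induction_on with
    | _ m ih =>
      intro v hv
      by_cases hr : v = r
      · subst hr; exact SimpleGraph.Reachable.refl _
      · exact (hadj v hr).reachable.trans (ih _ (hv ▸ h v hr) _ rfl)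
  have hc : H.Connected := by
    haveI : Nonempty V := ⟨r⟩
    exact ⟨fun u v => (hreach _ u rfl).trans (hreach _ v rfl).symm⟩
  rw [SimpleGraph.isTree_iff_connected_and_card]
  refine ⟨hc, ?_⟩
  have h1 := hc.card_vert_le_card_edgeSet_add_one
  have hsub : H.edgeSet ⊆ ((Finset.univ.erase r).image (fun v => s(v, par v)) : Finset (Sym2 V)) := by
    intro e he
    rw [hH, SimpleGraph.edgeSet_fromEdgeSet] at he
    obtain ⟨⟨v, hv, rfl⟩, -⟩ := he
    simp only [Finset.coe_image, Set.mem_image, Finset.mem_coe, Finset.mem_erase]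
    exact ⟨v, ⟨hv, Finset.mem_univ _⟩, rfl⟩
  have h2 : Nat.card H.edgeSet ≤ Fintype.card V - 1 := by
    have := Set.ncard_le_ncard hsub (Finset.finite_toSet _)
    rw [Set.ncard_coe_finset] at this
    have h3 : ((Finset.univ.erase r).image (fun v => s(v, par v)) : Finset (Sym2 V)).card
        ≤ Fintype.card V - 1 := by
      refine Finset.card_image_le.trans ?_
      rw [Finset.card_erase_of_mem (Finset.mem_univ _), Finset.card_univ]
    exact this.trans h3
  have h4 : 0 < Fintype.card V := Fintype.card_pos_iff.mpr ⟨r⟩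
  rw [Nat.card_eq_fintype_card (α := V)] at *
  omega

theorem ho_walk {V : Type*} (G : SimpleGraph V) (f : ℕ → V) (m : ℕ)
    (h : ∀ k, k < m → G.Adj (f k) (f (k + 1))) :
    ∃ w : G.Walk (f 0) (f m), w.support = (List.range (m + 1)).map f ∧
      w.edges = (List.range m).map (fun k => s(f k, f (k + 1))) := by
  induction m with
  | zero => exact ⟨SimpleGraph.Walk.nil, by simp, by simp⟩
  | succ m ih =>
    obtain ⟨w, hs, he⟩ := ih (fun k hk => h k (by omega))
    refine ⟨w.concat (h m (by omega)), ?_, ?_⟩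
    · rw [SimpleGraph.Walk.support_concat, hs, List.range_succ (n := m + 1)]
      simp
    · rw [SimpleGraph.Walk.edges_concat, he, List.range_succ (n := m)]
      simp

theorem ho_cycle {V : Type*} (G : SimpleGraph V) (f : ℕ → V) (m : ℕ) (hm : 2 ≤ m)
    (h : ∀ k, k < m → G.Adj (f k) (f (k + 1))) (hl : G.Adj (f m) (f 0))
    (hinj : ∀ a b, a ≤ m → b ≤ m → f a = f b → a = b) :
    ∃ w : G.Walk (f m) (f m), w.IsCycle ∧ (∀ v, v ∈ w.support ↔ ∃ k, k ≤ m ∧ f k = v) ∧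
      (∀ e, e ∈ w.edges ↔ (e = s(f m, f 0) ∨ ∃ k, k < m ∧ e = s(f k, f (k + 1)))) := by
  obtain ⟨w, hs, he⟩ := ho_walk G f m h
  refine ⟨SimpleGraph.Walk.cons hl w, ?_, ?_, ?_⟩
  · rw [SimpleGraph.Walk.cons_isCycle_iff]
    constructor
    · rw [SimpleGraph.Walk.isPath_def, hs]
      refine List.Nodup.map_on ?_ List.nodup_range
      intro a ha b hb hab
      rw [List.mem_range] at ha hb
      exact hinj a b (by omega) (by omega) hab
    · rw [he]
      intro hmem
      rw [List.mem_map] at hmem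
      obtain ⟨k, hk, hke⟩ := hmem
      rw [List.mem_range] at hk
      rw [Sym2.eq_iff] at hke
      rcases hke with ⟨h1, h2⟩ | ⟨h1, h2⟩
      · have := hinj _ _ (by omega) (by omega) h1; omega
      · have := hinj _ _ (by omega) (by omega) h1
        have := hinj _ _ (by omega) (by omega) h2; omega
  · intro v
    rw [SimpleGraph.Walk.support_cons, List.mem_cons, hs]
    simp only [List.mem_map, List.mem_range]
    constructor
    · rintro (rfl | ⟨k, hk, rfl⟩)
      · exact ⟨m, le_refl _, rfl⟩
      · exact ⟨k, by omega, rfl⟩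
    · rintro ⟨k, hk, rfl⟩
      exact Or.inr ⟨k, by omega, rfl⟩
  · intro e
    rw [SimpleGraph.Walk.edges_cons, List.mem_cons, he]
    simp only [List.mem_map, List.mem_range]
    constructor
    · rintro (h | ⟨k, hk, h⟩)
      · exact Or.inl h
      · exact Or.inr ⟨k, hk, h.symm⟩
    · rintro (h | ⟨k, hk, h⟩)
      · exact Or.inl h
      · exact Or.inr ⟨k, hk, h.symm⟩

/-- Certificate lemma on the vertex level. -/
theorem ho_certV {V : Type*} [Fintype V] (G : SimpleGraph V) (D : Set V) (r : V) (par : V → V)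
    (rk : V → ℕ)
    (hpar : ∀ v, v ≠ r → G.Adj v (par v) ∧ rk (par v) < rk v ∧ par v ∉ D) (hr : r ∉ D)
    (hout : ∀ v, v ∈ D → ∀ t, t ∉ D → G.Adj v t → t = par v)
    (hmatch : ∀ v t t', v ∉ D → t ∉ D → t' ∉ D → G.Adj v t → G.Adj v t' →
      ¬ ((v ≠ r ∧ par v = t) ∨ (t ≠ r ∧ par t = v)) →
      ¬ ((v ≠ r ∧ par v = t') ∨ (t' ≠ r ∧ par t' = v)) → t = t')
    (ι : Type) (hι : Fintype ι) (x : ι → V) (w : ∀ i : ι, G.Walk (x i) (x i))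
    (hcard : @Fintype.card ι hι ≤ 2) (hcyc : ∀ i, (w i).IsCycle)
    (hdisj : Pairwise fun i j => ∀ v : V, v ∈ (w i).support → v ∉ (w j).support)
    (hsup : ∀ i v, v ∈ (w i).support → v ∈ D)
    (hind : ∀ v t, v ∈ D → t ∈ D → G.Adj v t → ∃ i, s(v, t) ∈ (w i).edges) :
    HOGood G := by
  set T : Set (Sym2 V) := {e : Sym2 V | ∃ v, v ≠ r ∧ e = s(v, par v)} with hT
  set C : Set (Sym2 V) := ⋃ i, {e : Sym2 V | e ∈ (w i).edges} with hC
  have hTG : T ⊆ G.edgeSet := by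
    rintro e ⟨v, hv, rfl⟩
    exact (hpar v hv).1
  have hCG : C ⊆ G.edgeSet := by
    intro e he
    rw [hC, Set.mem_iUnion] at he
    obtain ⟨i, hi⟩ := he
    exact (w i).edges_subset_edgeSet hi
  have hCD : ∀ v t, s(v, t) ∈ C → v ∈ D ∧ t ∈ D := by
    intro v t he
    rw [hC, Set.mem_iUnion] at he
    obtain ⟨i, hi⟩ := he
    exact ⟨hsup i _ ((w i).fst_mem_support_of_mem_edges hi),
      hsup i _ ((w i).snd_mem_support_of_mem_edges hi)⟩
  have hTiff : ∀ v t, s(v, t) ∈ T ↔ ((v ≠ r ∧ par v = t) ∨ (t ≠ r ∧ par t = v)) := by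
    intro v t
    constructor
    · rintro ⟨y, hy, he⟩
      rw [Sym2.eq_iff] at he
      rcases he with ⟨rfl, rfl⟩ | ⟨rfl, rfl⟩
      · exact Or.inl ⟨hy, rfl⟩
      · exact Or.inr ⟨hy, rfl⟩
    · rintro (⟨h1, h2⟩ | ⟨h1, h2⟩)
      · exact ⟨v, h1, by rw [h2]⟩
      · exact ⟨t, h1, by rw [h2, Sym2.eq_swap]⟩
  have hTC : Disjoint T C := by
    rw [Set.disjoint_left]
    rintro e ⟨v, hv, rfl⟩ hc
    exact (hpar v hv).2.2 (hCD _ _ hc).2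
  have hMD : ∀ v t, s(v, t) ∈ G.edgeSet \ (T ∪ C) → v ∉ D := by
    intro v t he hv
    rw [Set.mem_diff, SimpleGraph.mem_edgeSet] at he
    apply he.2
    by_cases ht : t ∈ D
    · right
      rw [hC, Set.mem_iUnion]
      exact hind v t hv ht he.1
    · left
      rw [hTiff]
      left
      exact ⟨fun h => hr (h ▸ hv), (hout v hv t ht he.1).symm⟩
  have hMD2 : ∀ v t, s(v, t) ∈ G.edgeSet \ (T ∪ C) → t ∉ D := by
    intro v t he
    rw [Sym2.eq_swap] at he
    exact hMD t v he
  refine ⟨T, G.edgeSet \ (T ∪ C), C, ?_, ?_, hTC, ?_, ?_, ?_, ι, hι, x, w, hcard, hcyc, hdisj, rfl⟩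
  · ext e
    simp only [Set.mem_union, Set.mem_diff]
    constructor
    · rintro ((h | h) | h)
      · exact hTG h
      · exact h.1
      · exact hCG h
    · intro h
      tauto
  · rw [Set.disjoint_left]
    intro e h1 h2
    exact h2.2 (Or.inl h1)
  · rw [Set.disjoint_left]
    intro e h1 h2
    exact h1.2 (Or.inr h2)
  · exact ho_tree_of_par r par rk (fun v hv => (hpar v hv).2.1)
  · intro e he f hf hne v hve hvf
    obtain ⟨t, rfl⟩ := hve
    obtain ⟨t', rfl⟩ := hvf
    apply hne
    have := hmatch v t t' (hMD _ _ he) (hMD2 _ _ he) (hMD2 _ _ hf) he.1 hf.1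
      (fun h => he.2 (Or.inl ((hTiff _ _).2 h))) (fun h => hf.2 (Or.inl ((hTiff _ _).2 h)))
    rw [this]

structure HOPos (n : ℕ) (A : ℕ → ℕ → Prop) : Prop where
  symm : ∀ s t, A s t → A t s
  irr : ∀ s, ¬ A s s
  rng : ∀ s t, A s t → 1 ≤ s ∧ s ≤ n ∧ 1 ≤ t ∧ t ≤ n
  path : ∀ s, 1 ≤ s → s < n → A s (s + 1)
  deg : ∀ s a b c d, A s a → A s b → A s c → A s d → a ≠ b → a ≠ c → b ≠ c →
    d = a ∨ d = b ∨ d = c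
  ex : ∀ s, 1 ≤ s → s ≤ n → ∀ a b, ∃ t, A s t ∧ t ≠ a ∧ t ≠ b

def HOLab {V : Type*} (G : SimpleGraph V) (n : ℕ) (A : ℕ → ℕ → Prop) : Prop :=
  HOPos n A ∧ ∃ (σ : ℕ → V) (idx : V → ℕ), (∀ s, 1 ≤ s → s ≤ n → idx (σ s) = s) ∧
    (∀ v, 1 ≤ idx v ∧ idx v ≤ n ∧ σ (idx v) = v) ∧
    (∀ s t, 1 ≤ s → s ≤ n → 1 ≤ t → t ≤ n → (A s t ↔ G.Adj (σ s) (σ t)))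

def HOCyc (A : ℕ → ℕ → Prop) (S : ℕ → Prop) : Prop :=
  ∃ (m : ℕ) (f : ℕ → ℕ), 2 ≤ m ∧ (∀ k, k < m → A (f k) (f (k + 1))) ∧ A (f m) (f 0) ∧
    (∀ a b, a ≤ m → b ≤ m → f a = f b → a = b) ∧ (∀ s, S s ↔ ∃ k, k ≤ m ∧ f k = s) ∧
    (∀ a b, a < b → b ≤ m → A (f a) (f b) → b = a + 1 ∨ (a = 0 ∧ b = m))

theorem ho_cyc_nbrs {n : ℕ} {A : ℕ → ℕ → Prop} (P : HOPos n A) {S : ℕ → Prop} (h : HOCyc A S)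
    (s : ℕ) (hs : S s) : ∃ a b, S a ∧ S b ∧ a ≠ b ∧ A s a ∧ A s b ∧
      ∀ t, S t → A s t → t = a ∨ t = b := by
  obtain ⟨m, f, hm, hp, hl, hinj, hS, hind⟩ := h
  obtain ⟨k, hk, rfl⟩ := (hS s).1 hs
  have key : ∀ k', k' ≤ m → A (f k) (f k') →
      k' = k + 1 ∨ k = k' + 1 ∨ (k = 0 ∧ k' = m) ∨ (k' = 0 ∧ k = m) := by
    intro k' hk' hA
    rcases lt_trichotomy k k' with h | h | h
    · rcases hind k k' h hk' hA with h | h <;> omega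
    · subst h; exact absurd hA (P.irr _)
    · rcases hind k' k h hk (P.symm _ _ hA) with h | h <;> omega
  by_cases h0 : k = 0
  · subst h0
    refine ⟨f 1, f m, (hS _).2 ⟨1, by omega, rfl⟩, (hS _).2 ⟨m, by omega, rfl⟩, ?_, hp 0 (by omega),
      P.symm _ _ hl, ?_⟩
    · intro h; have := hinj _ _ (by omega) (by omega) h; omega
    · intro t ht hA
      obtain ⟨k', hk', rfl⟩ := (hS t).1 ht
      have h' := key k' hk' hA
      have : k' = 1 ∨ k' = m := by omega
      rcases this with rfl | rfl <;> simp
  by_cases h1 : k = m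
  · subst h1
    refine ⟨f 0, f (k - 1), (hS _).2 ⟨0, by omega, rfl⟩, (hS _).2 ⟨k - 1, by omega, rfl⟩, ?_, hl,
      ?_, ?_⟩
    · intro h; have := hinj _ _ (by omega) (by omega) h; omega
    · have := hp (k - 1) (by omega)
      rw [show k - 1 + 1 = k by omega] at this
      exact P.symm _ _ this
    · intro t ht hA
      obtain ⟨k', hk', rfl⟩ := (hS t).1 ht
      have h' := key k' hk' hA
      have : k' = 0 ∨ k' = k - 1 := by omega
      rcases this with rfl | rfl <;> simp
  · refine ⟨f (k + 1), f (k - 1), (hS _).2 ⟨k + 1, by omega, rfl⟩, (hS _).2 ⟨k - 1, by omega, rfl⟩,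
      ?_, hp k (by omega), ?_, ?_⟩
    · intro h; have := hinj _ _ (by omega) (by omega) h; omega
    · have := hp (k - 1) (by omega)
      rw [show k - 1 + 1 = k by omega] at this
      exact P.symm _ _ this
    · intro t ht hA
      obtain ⟨k', hk', rfl⟩ := (hS t).1 ht
      have h' := key k' hk' hA
      have : k' = k + 1 ∨ k' = k - 1 := by omega
      rcases this with rfl | rfl <;> simp

/-- transfer an induced cycle to `G` -/
theorem ho_cyc_walk {V : Type*} {G : SimpleGraph V} {n : ℕ} {A : ℕ → ℕ → Prop} (P : HOPos n A)
    (σ : ℕ → V) (idx : V → ℕ) (h1 : ∀ s, 1 ≤ s → s ≤ n → idx (σ s) = s)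
    (h2 : ∀ v, 1 ≤ idx v ∧ idx v ≤ n ∧ σ (idx v) = v)
    (h3 : ∀ s t, 1 ≤ s → s ≤ n → 1 ≤ t → t ≤ n → (A s t ↔ G.Adj (σ s) (σ t)))
    {S : ℕ → Prop} (h : HOCyc A S) :
    ∃ (x : V) (w : G.Walk x x), w.IsCycle ∧ (∀ v, v ∈ w.support ↔ S (idx v)) ∧
      (∀ v t, S (idx v) → S (idx t) → G.Adj v t → s(v, t) ∈ w.edges) := by
  obtain ⟨m, f, hm, hp, hl, hinj, hS, hind⟩ := h
  have hAG : ∀ s t, A s t → G.Adj (σ s) (σ t) := by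
    intro s t hA
    obtain ⟨a, b, c, d⟩ := P.rng s t hA
    exact (h3 s t a b c d).1 hA
  have hGA : ∀ v t, G.Adj v t → A (idx v) (idx t) := by
    intro v t hA
    rw [h3 _ _ (h2 v).1 (h2 v).2.1 (h2 t).1 (h2 t).2.1, (h2 v).2.2, (h2 t).2.2]
    exact hA
  have hr : ∀ k, k ≤ m → 1 ≤ f k ∧ f k ≤ n := by
    intro k hk
    rcases Nat.lt_or_ge k m with h | h
    · have := P.rng _ _ (hp k h); omega
    · obtain rfl : k = m := by omega
      have := P.rng _ _ hl; omega
  obtain ⟨w, hw1, hw2, hw3⟩ := ho_cycle G (fun k => σ (f k)) m hm (fun k hk => hAG _ _ (hp k hk))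
    (hAG _ _ hl) (by
      intro a b ha hb hab
      apply hinj a b ha hb
      rw [← h1 _ (hr a ha).1 (hr a ha).2, ← h1 _ (hr b hb).1 (hr b hb).2]
      exact congrArg idx hab)
  have hsv : ∀ v, S (idx v) ↔ ∃ k, k ≤ m ∧ σ (f k) = v := by
    intro v
    rw [hS]
    constructor
    · rintro ⟨k, hk, h⟩; exact ⟨k, hk, by rw [h, (h2 v).2.2]⟩
    · rintro ⟨k, hk, rfl⟩; exact ⟨k, hk, (h1 _ (hr k hk).1 (hr k hk).2).symm⟩
  refine ⟨_, w, hw1, fun v => by rw [hw2, hsv], ?_⟩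
  intro v t hv ht hA
  obtain ⟨a, ha, hav⟩ := (hS _).1 hv
  obtain ⟨b, hb, hbt⟩ := (hS _).1 ht
  have hA' := hGA _ _ hA
  rw [← hav, ← hbt] at hA'
  have ev : v = σ (f a) := by rw [hav, (h2 v).2.2]
  have et : t = σ (f b) := by rw [hbt, (h2 t).2.2]
  rw [hw3, ev, et]
  rcases lt_trichotomy a b with h | h | h
  · rcases hind a b h hb hA' with h' | ⟨h', h''⟩
    · subst h'; exact Or.inr ⟨a, by omega, rfl⟩
    · subst h' h''; left; exact Sym2.eq_swap
  · subst h; exact absurd hA' (P.irr _)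
  · rcases hind b a h ha (P.symm _ _ hA') with h' | ⟨h', h''⟩
    · subst h'; exact Or.inr ⟨b, by omega, Sym2.eq_swap⟩
    · subst h' h''; left; rfl

set_option maxHeartbeats 1000000 in
/-- Certificate on positions. -/
theorem ho_cert {V : Type*} [Fintype V] {G : SimpleGraph V} {n : ℕ} {A : ℕ → ℕ → Prop}
    (L : HOLab G n A) (hn3 : 3 ≤ n) (p i j k l u w c : ℕ) (S1 S2 : ℕ → Prop)
    (hD : ∀ s, (S1 s ∨ S2 s) ↔ ((1 ≤ s ∧ s ≤ p) ∨ (i ≤ s ∧ s ≤ j) ∨ (k ≤ s ∧ s ≤ l)))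
    (ho : p < i ∧ i ≤ j ∧ j + 1 < k ∧ l ≤ n) (hkl : k ≤ l ∨ (k = n + 1 ∧ l = n))
    (hS1 : HOCyc A S1) (hS2 : (∀ s, ¬ S2 s) ∨ HOCyc A S2) (hdis : ∀ s, S1 s → ¬ S2 s)
    (hno : ∀ s t, S1 s → S2 t → ¬ A s t)
    (hL : p + 1 < i → p < u ∧ u < i ∧ A u w ∧ j < w ∧ w < k ∧ (p = 0 → u = 1))
    (hR : l < n → A n c ∧ j < c ∧ c < k)
    (hH : k = n + 1 → A 1 n ∧ p = 0 ∧ (1 < i → u = 1 ∧ w = n)) : HOGood G := by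
  classical
  obtain ⟨P, σ, idx, h1, h2, h3⟩ := L
  obtain ⟨D, hDdef⟩ : ∃ D : ℕ → Prop, D = fun s => S1 s ∨ S2 s := ⟨_, rfl⟩
  have hDS : ∀ s, D s ↔ (S1 s ∨ S2 s) := by intro s; rw [hDdef]
  have hDiff : ∀ s, D s ↔ ((1 ≤ s ∧ s ≤ p) ∨ (i ≤ s ∧ s ≤ j) ∨ (k ≤ s ∧ s ≤ l)) := by
    intro s; rw [hDS]; exact hD s
  clear hDdef hD
  have hDr : ∀ s, D s → 1 ≤ s ∧ s ≤ n := by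
    intro s hs; rw [hDiff] at hs; omega
  have hg : ∀ s, ∃ g, D s → (A s g ∧ ¬ D g ∧ ∀ t, ¬ D t → A s t → t = g) := by
    intro s
    by_cases hs : D s
    swap
    · exact ⟨0, fun h => absurd h hs⟩
    have : ∃ a b, D a ∧ D b ∧ a ≠ b ∧ A s a ∧ A s b ∧ ∀ t, D t → A s t → t = a ∨ t = b := by
      rcases (hDS s).1 hs with hs | hs
      · obtain ⟨a, b, ha, hb, hab, h4, h5, h6⟩ := ho_cyc_nbrs P hS1 s hs
        refine ⟨a, b, (hDS _).2 (Or.inl ha), (hDS _).2 (Or.inl hb), hab, h4, h5, ?_⟩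
        intro t ht hA
        rcases (hDS t).1 ht with ht | ht
        · exact h6 t ht hA
        · exact absurd hA (hno _ _ hs ht)
      · have hc : HOCyc A S2 := by
          rcases hS2 with h | h
          · exact absurd hs (h s)
          · exact h
        obtain ⟨a, b, ha, hb, hab, h4, h5, h6⟩ := ho_cyc_nbrs P hc s hs
        refine ⟨a, b, (hDS _).2 (Or.inr ha), (hDS _).2 (Or.inr hb), hab, h4, h5, ?_⟩
        intro t ht hA
        rcases (hDS t).1 ht with ht | ht
        · exact absurd (P.symm _ _ hA) (hno _ _ ht hs)
        · exact h6 t ht hA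
    obtain ⟨a, b, ha, hb, hab, h4, h5, h6⟩ := this
    obtain ⟨g, hg, hga, hgb⟩ := P.ex s (hDr s hs).1 (hDr s hs).2 a b
    refine ⟨g, fun _ => ⟨hg, ?_, ?_⟩⟩
    · intro hDg
      rcases h6 g hDg hg with h | h
      · exact hga h
      · exact hgb h
    · intro t ht hA
      rcases P.deg s a b g t h4 h5 hg hA hab hga.symm hgb.symm with h | h | h
      · exact absurd (h ▸ ha) ht
      · exact absurd (h ▸ hb) ht
      · exact h
  choose g hg using hg
  obtain ⟨par, hpar⟩ : ∃ par : ℕ → ℕ, ∀ s, par s = if D s then g s else if s < i then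
      (if s < u then s + 1 else if s = u then w else s - 1) else if s < k then s - 1 else
      (if s = n then c else s + 1) := ⟨_, fun _ => rfl⟩
  obtain ⟨rk, hrk⟩ : ∃ rk : ℕ → ℕ, ∀ s, rk s = if D s then 5 * n + 5 else if s < i then
      (if s < u then n + 1 + (u - s) else n + 1 + (s - u)) else if s < k then s else
      (n + 1 + (n - s)) := ⟨_, fun _ => rfl⟩
  have hparA : ∀ s, 1 ≤ s → s ≤ n → s ≠ j + 1 → A s (par s) ∧ rk (par s) < rk s ∧ ¬ D (par s) := by
    intro s hs1 hsn hsr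
    by_cases hs : D s
    · have e : par s = g s := by rw [hpar]; rw [if_pos hs]
      obtain ⟨q1, q2, -⟩ := hg s hs
      rw [e]
      refine ⟨q1, ?_, q2⟩
      have := P.rng _ _ q1
      rw [hrk, hrk]
      rw [if_neg q2, if_pos hs]
      split_ifs with h4 h5
      · have := hL (by rw [hDiff] at q2; omega)
        omega
      · omega
      · omega
      · omega
    · have hs' := hs
      rw [hDiff] at hs'
      by_cases c1 : s < i
      · obtain ⟨e1, e2, e3, e4, e5, e6⟩ := hL (by omega)
        have hw := P.rng _ _ e3
        by_cases c2 : s < u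
        · have hDn : ¬ D (s + 1) := by rw [hDiff]; omega
          have e : par s = s + 1 := by rw [hpar]; rw [if_neg hs, if_pos c1, if_pos c2]
          rw [e]
          refine ⟨P.path s hs1 (by omega), ?_, hDn⟩
          rw [hrk, hrk]
          rw [if_neg hs, if_pos c1, if_pos c2, if_neg hDn, if_pos (by omega)]
          split_ifs <;> omega
        · by_cases c3 : s = u
          · have hDn : ¬ D w := by rw [hDiff]; omega
            have e : par s = w := by
              rw [hpar]; rw [if_neg hs, if_pos c1, if_neg c2, if_pos c3]
            rw [e]
            refine ⟨c3 ▸ e3, ?_, hDn⟩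
            rw [hrk, hrk]
            rw [if_neg hs, if_pos c1, if_neg c2, if_neg hDn, if_neg (by omega), if_pos (by omega)]
            omega
          · have hDn : ¬ D (s - 1) := by rw [hDiff]; omega
            have e : par s = s - 1 := by
              rw [hpar]; rw [if_neg hs, if_pos c1, if_neg c2, if_neg c3]
            rw [e]
            refine ⟨?_, ?_, hDn⟩
            · have := P.path (s - 1) (by omega) (by omega)
              rw [show s - 1 + 1 = s by omega] at this
              exact P.symm _ _ this
            rw [hrk, hrk]
            rw [if_neg hs, if_pos c1, if_neg c2, if_neg hDn, if_pos (by omega), if_neg (by omega)]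
            omega
      · by_cases c2 : s < k
        · have hDn : ¬ D (s - 1) := by rw [hDiff]; omega
          have e : par s = s - 1 := by
            rw [hpar]; rw [if_neg hs, if_neg c1, if_pos c2]
          rw [e]
          refine ⟨?_, ?_, hDn⟩
          · have := P.path (s - 1) (by omega) (by omega)
            rw [show s - 1 + 1 = s by omega] at this
            exact P.symm _ _ this
          rw [hrk, hrk]
          rw [if_neg hs, if_neg c1, if_pos c2, if_neg hDn, if_neg (by omega), if_pos (by omega)]
          omega
        · obtain ⟨e1, e2, e3⟩ := hR (by omega)
          by_cases c3 : s = n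
          · have hDn : ¬ D c := by rw [hDiff]; omega
            have e : par s = c := by
              rw [hpar]; rw [if_neg hs, if_neg c1, if_neg c2, if_pos c3]
            rw [e]
            refine ⟨c3 ▸ e1, ?_, hDn⟩
            have := P.rng _ _ e1
            rw [hrk, hrk]
            rw [if_neg hs, if_neg c1, if_neg c2, if_neg hDn, if_neg (by omega), if_pos (by omega)]
            omega
          · have hDn : ¬ D (s + 1) := by rw [hDiff]; omega
            have e : par s = s + 1 := by
              rw [hpar]; rw [if_neg hs, if_neg c1, if_neg c2, if_neg c3]
            rw [e]
            refine ⟨P.path s hs1 (by omega), ?_, hDn⟩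
            rw [hrk, hrk]
            rw [if_neg hs, if_neg c1, if_neg c2, if_neg hDn, if_neg (by omega), if_neg (by omega)]
            omega
  -- tree adjacency on positions
  obtain ⟨PT, hPT⟩ : ∃ PT : ℕ → ℕ → Prop, ∀ s t, PT s t ↔ (s ≠ j + 1 ∧ par s = t) ∨ (t ≠ j + 1 ∧ par t = s) := ⟨_, fun _ _ => Iff.rfl⟩
  have hsucc : ∀ s, 1 ≤ s → s < n → ¬ D s → ¬ D (s + 1) → PT s (s + 1) := by
    intro s hs1 hsn hs hs'
    have q1 := hs
    have q2 := hs'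
    rw [hDiff] at q1 q2
    rw [hPT]
    by_cases c1 : s < i
    · by_cases c2 : s < u
      · left
        refine ⟨by omega, ?_⟩
        rw [hpar]; rw [if_neg hs, if_pos c1, if_pos c2]
      · right
        refine ⟨by omega, ?_⟩
        rw [hpar]; rw [if_neg hs', if_pos (by omega), if_neg (by omega), if_neg (by omega)]
        omega
    · by_cases c2 : s < k
      · right
        refine ⟨by omega, ?_⟩
        rw [hpar]; rw [if_neg hs', if_neg (by omega), if_pos (by omega)]
        omega
      · left
        refine ⟨by omega, ?_⟩
        rw [hpar]; rw [if_neg hs, if_neg c1, if_neg c2, if_neg (by omega)]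
  have hPTsymm : ∀ s t, PT s t → PT t s := by
    intro s t h
    rw [hPT] at h ⊢
    exact h.symm
  have htwo : ∀ s, 1 ≤ s → s ≤ n → ¬ D s → ∃ a b, a ≠ b ∧ A s a ∧ A s b ∧
      (D a ∨ PT s a) ∧ (D b ∨ PT s b) := by
    intro s hs1 hsn hs
    have q1 := hs
    rw [hDiff] at q1
    have hup : s < n → A s (s + 1) ∧ (D (s + 1) ∨ PT s (s + 1)) := by
      intro h
      refine ⟨P.path s hs1 h, ?_⟩
      by_cases hd : D (s + 1)
      · exact Or.inl hd
      · exact Or.inr (hsucc s hs1 h hs hd)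
    have hdn : 1 < s → A s (s - 1) ∧ (D (s - 1) ∨ PT s (s - 1)) := by
      intro h
      have h7 := P.path (s - 1) (by omega) (by omega)
      have h8 := hsucc (s - 1) (by omega) (by omega)
      rw [show s - 1 + 1 = s by omega] at h7 h8
      refine ⟨P.symm _ _ h7, ?_⟩
      by_cases hd : D (s - 1)
      · exact Or.inl hd
      · exact Or.inr (hPTsymm _ _ (h8 hd hs))
    by_cases c1 : s = 1
    · obtain ⟨e1, e2, e3, e4, e5, e6⟩ := hL (by omega)
      have e7 := e6 (by omega)
      obtain ⟨r1, r2⟩ := hup (by have := P.rng _ _ e3; omega)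
      refine ⟨s + 1, w, by omega, r1, ?_, r2, Or.inr ((hPT _ _).2 (Or.inl ⟨by omega, ?_⟩))⟩
      · rw [c1, ← e7]; exact e3
      · rw [hpar]; rw [if_neg hs, if_pos (by omega), if_neg (by omega), if_pos (by omega)]
    by_cases c2 : s = n
    · obtain ⟨r1, r2⟩ := hdn (by omega)
      by_cases c3 : k = n + 1
      · obtain ⟨f1, f2, f3⟩ := hH c3
        refine ⟨s - 1, 1, by omega, r1, ?_, r2, ?_⟩
        · rw [c2]; exact P.symm _ _ f1
        · by_cases c4 : 1 < i
          · right; rw [hPT]; right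
            refine ⟨by omega, ?_⟩
            have hd1 : ¬ D 1 := by rw [hDiff]; omega
            obtain ⟨f4, f5⟩ := f3 c4
            rw [hpar]; rw [if_neg hd1, if_pos (by omega), if_neg (by omega), if_pos (by omega)]
            omega
          · left; rw [hDiff]; omega
      · obtain ⟨e1, e2, e3⟩ := hR (by omega)
        refine ⟨s - 1, c, by omega, r1, c2 ▸ e1, r2, Or.inr ((hPT _ _).2 (Or.inl ⟨by omega, ?_⟩))⟩
        rw [hpar]; rw [if_neg hs, if_neg (by omega), if_neg (by omega), if_pos c2]
    · obtain ⟨r1, r2⟩ := hdn (by omega)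
      obtain ⟨r3, r4⟩ := hup (by omega)
      exact ⟨s - 1, s + 1, by omega, r1, r3, r2, r4⟩
  have hmatch : ∀ s t t', 1 ≤ s → s ≤ n → ¬ D s → ¬ D t → ¬ D t' → A s t → A s t' → ¬ PT s t →
      ¬ PT s t' → t = t' := by
    intro s t t' hs1 hsn hs ht ht' hA hA' hp hp'
    obtain ⟨a, b, hab, ha, hb, ha', hb'⟩ := htwo s hs1 hsn hs
    have hta : t ≠ a := by rintro rfl; tauto
    have htb : t ≠ b := by rintro rfl; tauto
    have hta' : t' ≠ a := by rintro rfl; tauto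
    have htb' : t' ≠ b := by rintro rfl; tauto
    rcases P.deg s a b t t' ha hb hA hA' hab hta.symm htb.symm with h | h | h
    · exact absurd h hta'
    · exact absurd h htb'
    · exact h.symm
  -- transfer
  have hGA : ∀ v t, G.Adj v t ↔ A (idx v) (idx t) := by
    intro v t
    rw [h3 _ _ (h2 v).1 (h2 v).2.1 (h2 t).1 (h2 t).2.1, (h2 v).2.2, (h2 t).2.2]
  have hj : 1 ≤ j + 1 ∧ j + 1 ≤ n := by omega
  have hne : ∀ v, v ≠ σ (j + 1) ↔ idx v ≠ j + 1 := by
    intro v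
    constructor
    · intro h h'; apply h; rw [← h', (h2 v).2.2]
    · rintro h rfl; exact h (h1 _ hj.1 hj.2)
  have hidp : ∀ v, v ≠ σ (j + 1) → idx (σ (par (idx v))) = par (idx v) := by
    intro v hv
    have := P.rng _ _ (hparA (idx v) (h2 v).1 (h2 v).2.1 ((hne v).1 hv)).1
    exact h1 _ this.2.2.1 this.2.2.2
  have hr0 : ¬ D (j + 1) := by rw [hDiff]; omega
  have hPTV : ∀ v t, PT (idx v) (idx t) → ((v ≠ σ (j + 1) ∧ σ (par (idx v)) = t) ∨
      (t ≠ σ (j + 1) ∧ σ (par (idx t)) = v)) := by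
    intro v t h
    rw [hPT] at h
    rcases h with ⟨a, b⟩ | ⟨a, b⟩
    · left; exact ⟨(hne v).2 a, by rw [b, (h2 t).2.2]⟩
    · right; exact ⟨(hne t).2 a, by rw [b, (h2 v).2.2]⟩
  have idxinj : ∀ v t, idx v = idx t → v = t := by
    intro v t h; rw [← (h2 v).2.2, ← (h2 t).2.2, h]
  have main := ho_certV G {v | D (idx v)} (σ (j + 1)) (fun v => σ (par (idx v))) (fun v => rk (idx v))
    (by
      intro v hv
      have := hparA (idx v) (h2 v).1 (h2 v).2.1 ((hne v).1 hv)
      rw [hGA]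
      simp only [Set.mem_setOf_eq]
      rw [hidp v hv]
      exact this)
    (by simp only [Set.mem_setOf_eq]; rw [h1 _ hj.1 hj.2]; exact hr0)
    (by
      intro v hv t ht hA
      simp only [Set.mem_setOf_eq] at hv ht
      rw [hGA] at hA
      have := (hg _ hv).2.2 _ ht hA
      have e : par (idx v) = g (idx v) := by rw [hpar]; rw [if_pos hv]
      rw [e, ← this, (h2 t).2.2])
    (by
      intro v t t' hv ht ht' hA hA' hn hn'
      rw [hGA] at hA hA'
      exact idxinj _ _ (hmatch _ _ _ (h2 v).1 (h2 v).2.1 hv ht ht' hA hA'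
        (fun h => hn (hPTV _ _ h)) (fun h => hn' (hPTV _ _ h))))
  obtain ⟨x1, w1, hw1, hw2, hw3⟩ := ho_cyc_walk P σ idx h1 h2 h3 hS1
  rcases hS2 with hS2 | hS2
  · refine main Unit inferInstance (fun _ => x1) (fun _ => w1) (by simp) (fun _ => hw1) ?_ ?_ ?_
    · intro a b hab; exact absurd rfl hab
    · intro _ v hv
      exact (hDS _).2 (Or.inl ((hw2 v).1 hv))
    · intro v t hv ht hA
      refine ⟨(), hw3 v t ?_ ?_ hA⟩
      · exact ((hDS _).1 hv).resolve_right (hS2 _)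
      · exact ((hDS _).1 ht).resolve_right (hS2 _)
  · obtain ⟨x2, w2, hw1', hw2', hw3'⟩ := ho_cyc_walk P σ idx h1 h2 h3 hS2
    refine main Bool inferInstance (fun b => if b then x1 else x2)
      (fun b => match b with | true => w1 | false => w2) (by simp) ?_ ?_ ?_ ?_
    · rintro (_ | _)
      · exact hw1'
      · exact hw1
    · rintro (_ | _) (_ | _) hab v hv hv'
      · exact hab rfl
      · exact hdis _ ((hw2 v).1 hv') ((hw2' v).1 hv)
      · exact hdis _ ((hw2 v).1 hv) ((hw2' v).1 hv')
      · exact hab rfl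
    · rintro (_ | _) v hv
      · exact (hDS _).2 (Or.inr ((hw2' v).1 hv))
      · exact (hDS _).2 (Or.inl ((hw2 v).1 hv))
    · intro v t hv ht hA
      rcases (hDS _).1 hv with hv | hv <;> rcases (hDS _).1 ht with ht | ht
      · exact ⟨true, hw3 v t hv ht hA⟩
      · exact absurd ((hGA _ _).1 hA) (hno _ _ hv ht)
      · exact absurd (P.symm _ _ ((hGA _ _).1 hA)) (hno _ _ ht hv)
      · exact ⟨false, hw3' v t hv ht hA⟩


def HOCh (A : ℕ → ℕ → Prop) (lo hi : ℕ) : Prop := ∃ s t, lo ≤ s ∧ s + 2 ≤ t ∧ t ≤ hi ∧ A s t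

def HOMin (A : ℕ → ℕ → Prop) (i j : ℕ) : Prop :=
  i + 2 ≤ j ∧ A i j ∧ ∀ s t, i ≤ s → s + 2 ≤ t → t ≤ j → A s t → s = i ∧ t = j

theorem ho_min {A : ℕ → ℕ → Prop} : ∀ (d s t : ℕ), t - s ≤ d → s + 2 ≤ t → A s t →
    ∃ i j, s ≤ i ∧ j ≤ t ∧ HOMin A i j := by
  intro d
  induction d with
  | zero => intro s t h1 h2; omega
  | succ d ih =>
    intro s t h1 h2 h3
    by_cases h : ∃ s' t', s ≤ s' ∧ s' + 2 ≤ t' ∧ t' ≤ t ∧ A s' t' ∧ ¬ (s' = s ∧ t' = t)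
    · obtain ⟨s', t', q1, q2, q3, q4, q5⟩ := h
      obtain ⟨i, j, r1, r2, r3⟩ := ih s' t' (by omega) q2 q4
      exact ⟨i, j, by omega, by omega, r3⟩
    · refine ⟨s, t, le_rfl, le_rfl, h2, h3, ?_⟩
      intro s' t' q1 q2 q3 q4
      by_contra q5
      exact h ⟨s', t', q1, q2, q3, q4, q5⟩

theorem ho_ch_min {A : ℕ → ℕ → Prop} {lo hi : ℕ} (h : HOCh A lo hi) :
    ∃ i j, lo ≤ i ∧ j ≤ hi ∧ HOMin A i j := by
  obtain ⟨s, t, h1, h2, h3, h4⟩ := h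
  obtain ⟨i, j, r1, r2, r3⟩ := ho_min _ s t le_rfl h2 h4
  exact ⟨i, j, by omega, by omega, r3⟩

theorem ho_cyc1 {n : ℕ} {A : ℕ → ℕ → Prop} (P : HOPos n A) {i j : ℕ} (h : HOMin A i j) :
    HOCyc A (fun s => i ≤ s ∧ s ≤ j) := by
  obtain ⟨h1, h2, h3⟩ := h
  have hr := P.rng _ _ h2
  refine ⟨j - i, fun k => i + k, by omega, ?_, ?_, ?_, ?_, ?_⟩
  · intro k hk; exact P.path (i + k) (by omega) (by omega)
  · have : i + (j - i) = j := by omega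
    simp only [this, Nat.add_zero]; exact P.symm _ _ h2
  · intro a b _ _ h; simp only at h; omega
  · intro s; constructor
    · intro h; exact ⟨s - i, by omega, by simp only; omega⟩
    · rintro ⟨k, hk, rfl⟩; simp only; omega
  · intro a b hab hb hA
    simp only at hA
    by_cases hc : b = a + 1
    · exact Or.inl hc
    · right
      have := h3 _ _ (by omega) (by omega) (by omega) hA
      omega

theorem ho_noch {n : ℕ} {A : ℕ → ℕ → Prop} (P : HOPos n A) {lo hi : ℕ} (h : ¬ HOCh A lo hi) :
    ∀ s t, lo ≤ s → s ≤ hi → lo ≤ t → t ≤ hi → A s t → t = s + 1 ∨ s = t + 1 := by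
  intro s t h1 h2 h3 h4 hA
  by_contra hc
  rcases lt_trichotomy s t with h' | h' | h'
  · exact h ⟨s, t, h1, by omega, h4, hA⟩
  · subst h'; exact P.irr _ hA
  · exact h ⟨t, s, h3, by omega, h2, P.symm _ _ hA⟩

/-- nested type: edges x y' and x' y -/
theorem ho_cyc2 {n : ℕ} {A : ℕ → ℕ → Prop} (P : HOPos n A) {x x' y y' : ℕ} (hx : x ≤ x')
    (hxy : x' + 1 < y) (hy : y ≤ y') (h3 : x < x' ∨ y < y') (c1 : ¬ HOCh A x x')
    (c2 : ¬ HOCh A y y') (e1 : A x y') (e2 : A x' y)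
    (hc : ∀ s t, x ≤ s → s ≤ x' → y ≤ t → t ≤ y' → A s t → (s = x ∧ t = y') ∨ (s = x' ∧ t = y)) :
    HOCyc A (fun s => (x ≤ s ∧ s ≤ x') ∨ (y ≤ s ∧ s ≤ y')) := by
  have r1 := P.rng _ _ e1
  have r2 := P.rng _ _ e2
  obtain ⟨d, rfl⟩ : ∃ d, x' = x + d := ⟨x' - x, by omega⟩
  obtain ⟨e, rfl⟩ : ∃ e, y' = y + e := ⟨y' - y, by omega⟩
  obtain ⟨f, hf⟩ : ∃ f : ℕ → ℕ, ∀ k, f k = if k ≤ d then x + k else y + (k - d - 1) :=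
    ⟨_, fun _ => rfl⟩
  have f1 : ∀ k, k ≤ d → f k = x + k := by intro k hk; rw [hf, if_pos hk]
  have f2 : ∀ k, ¬ k ≤ d → f k = y + (k - d - 1) := by intro k hk; rw [hf, if_neg hk]
  refine ⟨d + e + 1, f, by omega, ?_, ?_, ?_, ?_, ?_⟩
  · intro k hk
    rcases lt_trichotomy k d with h | h | h
    · rw [f1 k (by omega), f1 (k + 1) (by omega)]; exact P.path _ (by omega) (by omega)
    · subst h
      rw [f1 k (by omega), f2 (k + 1) (by omega), show y + (k + 1 - k - 1) = y by omega]; exact e2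
    · rw [f2 k (by omega), f2 (k + 1) (by omega),
        show y + (k + 1 - d - 1) = y + (k - d - 1) + 1 by omega]
      exact P.path _ (by omega) (by omega)
  · rw [f1 0 (by omega), f2 _ (by omega), show y + (d + e + 1 - d - 1) = y + e by omega]
    exact P.symm _ _ e1
  · intro a b ha hb h
    rw [hf a, hf b] at h
    split_ifs at h <;> omega
  · intro s
    constructor
    · rintro (h | h)
      · exact ⟨s - x, by omega, by rw [f1 _ (by omega)]; omega⟩
      · exact ⟨s - y + d + 1, by omega, by rw [f2 _ (by omega)]; omega⟩
    · rintro ⟨k, hk, rfl⟩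
      rw [hf]; split_ifs <;> omega
  · intro a b hab hb hA
    by_cases ha : a ≤ d
    · by_cases hb' : b ≤ d
      · rw [f1 a ha, f1 b hb'] at hA
        have := ho_noch P c1 _ _ (by omega) (by omega) (by omega) (by omega) hA
        omega
      · rw [f1 a ha, f2 b hb'] at hA
        have := hc _ _ (by omega) (by omega) (by omega) (by omega) hA
        omega
    · rw [f2 a ha, f2 b (by omega)] at hA
      have := ho_noch P c2 _ _ (by omega) (by omega) (by omega) (by omega) hA
      omega

/-- crossing type: edges x y and x' y' -/
theorem ho_cyc2' {n : ℕ} {A : ℕ → ℕ → Prop} (P : HOPos n A) {x x' y y' : ℕ} (hx : x ≤ x')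
    (hxy : x' + 1 < y) (hy : y ≤ y') (h3 : x < x' ∨ y < y') (c1 : ¬ HOCh A x x')
    (c2 : ¬ HOCh A y y') (e1 : A x y) (e2 : A x' y')
    (hc : ∀ s t, x ≤ s → s ≤ x' → y ≤ t → t ≤ y' → A s t → (s = x ∧ t = y) ∨ (s = x' ∧ t = y')) :
    HOCyc A (fun s => (x ≤ s ∧ s ≤ x') ∨ (y ≤ s ∧ s ≤ y')) := by
  have r1 := P.rng _ _ e1
  have r2 := P.rng _ _ e2
  obtain ⟨d, rfl⟩ : ∃ d, x' = x + d := ⟨x' - x, by omega⟩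
  obtain ⟨e, rfl⟩ : ∃ e, y' = y + e := ⟨y' - y, by omega⟩
  obtain ⟨f, hf⟩ : ∃ f : ℕ → ℕ, ∀ k, f k = if k ≤ d then x + k else y + e - (k - d - 1) :=
    ⟨_, fun _ => rfl⟩
  have f1 : ∀ k, k ≤ d → f k = x + k := by intro k hk; rw [hf, if_pos hk]
  have f2 : ∀ k, ¬ k ≤ d → f k = y + e - (k - d - 1) := by intro k hk; rw [hf, if_neg hk]
  refine ⟨d + e + 1, f, by omega, ?_, ?_, ?_, ?_, ?_⟩
  · intro k hk
    rcases lt_trichotomy k d with h | h | h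
    · rw [f1 k (by omega), f1 (k + 1) (by omega)]; exact P.path _ (by omega) (by omega)
    · subst h
      rw [f1 k (by omega), f2 (k + 1) (by omega), show y + e - (k + 1 - k - 1) = y + e by omega]
      exact e2
    · rw [f2 k (by omega), f2 (k + 1) (by omega),
        show y + e - (k - d - 1) = y + e - (k + 1 - d - 1) + 1 by omega]
      exact P.symm _ _ (P.path _ (by omega) (by omega))
  · rw [f1 0 (by omega), f2 _ (by omega), show y + e - (d + e + 1 - d - 1) = y by omega]
    exact P.symm _ _ e1
  · intro a b ha hb h
    rw [hf a, hf b] at h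
    split_ifs at h <;> omega
  · intro s
    constructor
    · rintro (h | h)
      · exact ⟨s - x, by omega, by rw [f1 _ (by omega)]; omega⟩
      · exact ⟨y + e - s + d + 1, by omega, by rw [f2 _ (by omega)]; omega⟩
    · rintro ⟨k, hk, rfl⟩
      rw [hf]; split_ifs <;> omega
  · intro a b hab hb hA
    by_cases ha : a ≤ d
    · by_cases hb' : b ≤ d
      · rw [f1 a ha, f1 b hb'] at hA
        have := ho_noch P c1 _ _ (by omega) (by omega) (by omega) (by omega) hA
        omega
      · rw [f1 a ha, f2 b hb'] at hA
        have := hc _ _ (by omega) (by omega) (by omega) (by omega) hA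
        omega
    · rw [f2 a ha, f2 b (by omega)] at hA
      have := ho_noch P c2 _ _ (by omega) (by omega) (by omega) (by omega) hA
      omega

theorem ho_third {n : ℕ} {A : ℕ → ℕ → Prop} (P : HOPos n A) {s t t' : ℕ} (h1 : 1 < s) (h2 : s < n)
    (ht : A s t) (ht' : A s t') (c1 : t ≠ s - 1) (c2 : t ≠ s + 1) (c3 : t' ≠ s - 1)
    (c4 : t' ≠ s + 1) : t = t' := by
  have h3 := P.path (s - 1) (by omega) (by omega)
  rw [show s - 1 + 1 = s by omega] at h3
  rcases P.deg s (s - 1) (s + 1) t t' (P.symm _ _ h3) (P.path s (by omega) h2) ht ht' (by omega)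
    (by omega) (by omega) with h | h | h
  · exact absurd h c3
  · exact absurd h c4
  · exact h.symm

theorem ho_third_ex {n : ℕ} {A : ℕ → ℕ → Prop} (P : HOPos n A) {s : ℕ} (h1 : 1 < s) (h2 : s < n) :
    ∃ t, A s t ∧ (t + 2 ≤ s ∨ s + 2 ≤ t) := by
  obtain ⟨t, q1, q2, q3⟩ := P.ex s (by omega) (by omega) (s - 1) (s + 1)
  refine ⟨t, q1, ?_⟩
  have : t ≠ s := by rintro rfl; exact P.irr _ q1
  omega

theorem ho_one {n : ℕ} {A : ℕ → ℕ → Prop} (P : HOPos n A) (hn : 3 ≤ n) {a b t : ℕ} (h1 : A 1 a)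
    (h2 : A 1 b) (h3 : A 1 t) (ha : 3 ≤ a) (hb : 3 ≤ b) (hab : a ≠ b) : t = 2 ∨ t = a ∨ t = b :=
  P.deg 1 2 a b t (P.path 1 (by omega) (by omega)) h1 h2 h3 (by omega) (by omega) hab

theorem ho_one_ex {n : ℕ} {A : ℕ → ℕ → Prop} (P : HOPos n A) (hn : 3 ≤ n) (b : ℕ) :
    ∃ a, A 1 a ∧ 3 ≤ a ∧ a ≠ b := by
  obtain ⟨t, q1, q2, q3⟩ := P.ex 1 (by omega) (by omega) 2 b
  refine ⟨t, q1, ?_, q3⟩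
  have : t ≠ 1 := by rintro rfl; exact P.irr _ q1
  have := P.rng _ _ q1
  omega

/-- Transform along an involution. -/
theorem ho_trans {V : Type*} {G : SimpleGraph V} {n : ℕ} {A : ℕ → ℕ → Prop} (L : HOLab G n A)
    (π : ℕ → ℕ) (hπ : ∀ s, π (π s) = s) (hr : ∀ s, 1 ≤ s → s ≤ n → 1 ≤ π s ∧ π s ≤ n)
    (hp : ∀ s, 1 ≤ s → s < n → A (π s) (π (s + 1))) : HOLab G n (fun s t => A (π s) (π t)) := by
  obtain ⟨P, σ, idx, h1, h2, h3⟩ := L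
  have inj : ∀ a b, π a = π b → a = b := by intro a b h; rw [← hπ a, h, hπ]
  have hr' : ∀ s, 1 ≤ π s → π s ≤ n → 1 ≤ s ∧ s ≤ n := by
    intro s h h'; have := hr _ h h'; rwa [hπ] at this
  refine ⟨⟨fun s t h => P.symm _ _ h, fun s h => P.irr _ h, ?_, hp, ?_, ?_⟩,
    fun s => σ (π s), fun v => π (idx v), ?_, ?_, ?_⟩
  · intro s t h
    have := P.rng _ _ h
    have q1 := hr' s this.1 this.2.1
    have q2 := hr' t this.2.2.1 this.2.2.2
    exact ⟨q1.1, q1.2, q2⟩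
  · intro s a b c d ha hb hc hd hab hac hbc
    rcases P.deg _ _ _ _ _ ha hb hc hd (fun h => hab (inj _ _ h)) (fun h => hac (inj _ _ h))
      (fun h => hbc (inj _ _ h)) with h | h | h
    · exact Or.inl (inj _ _ h)
    · exact Or.inr (Or.inl (inj _ _ h))
    · exact Or.inr (Or.inr (inj _ _ h))
  · intro s hs hs' a b
    obtain ⟨t, q1, q2, q3⟩ := P.ex (π s) (hr s hs hs').1 (hr s hs hs').2 (π a) (π b)
    refine ⟨π t, by simpa only [hπ] using q1, ?_, ?_⟩
    · rintro rfl; exact q2 (hπ t).symm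
    · rintro rfl; exact q3 (hπ t).symm
  · intro s hs hs'
    simp only
    rw [h1 _ (hr s hs hs').1 (hr s hs hs').2, hπ]
  · intro v
    have := h2 v
    have q := hr _ this.1 this.2.1
    exact ⟨q.1, q.2, by simp only [hπ]; exact this.2.2⟩
  · intro s t a b c d
    exact h3 _ _ (hr s a b).1 (hr s a b).2 (hr t c d).1 (hr t c d).2

def hoRot (r s : ℕ) : ℕ := if 1 ≤ s ∧ s < r then r - s else s

theorem hoRot_lt {r s : ℕ} (h : 1 ≤ s) (h' : s < r) : hoRot r s = r - s := if_pos ⟨h, h'⟩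
theorem hoRot_ge {r s : ℕ} (h' : r ≤ s) : hoRot r s = s := if_neg (by omega)

theorem ho_rot {V : Type*} {G : SimpleGraph V} {n : ℕ} {A : ℕ → ℕ → Prop} (L : HOLab G n A)
    {r : ℕ} (h : A 1 r) (hr : 3 ≤ r) : HOLab G n (fun s t => A (hoRot r s) (hoRot r t)) := by
  have hrn := L.1.rng _ _ h
  apply ho_trans L
  · intro s; unfold hoRot; split_ifs <;> omega
  · intro s h1 h2; unfold hoRot; split_ifs <;> omega
  · intro s h1 h2
    by_cases c1 : s + 1 < r
    · rw [hoRot_lt h1 (by omega), hoRot_lt (by omega) c1]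
      have := L.1.path (r - (s + 1)) (by omega) (by omega)
      rw [show r - (s + 1) + 1 = r - s by omega] at this
      exact L.1.symm _ _ this
    · by_cases c2 : s < r
      · rw [hoRot_lt h1 c2, hoRot_ge (by omega), show r - s = 1 by omega, show s + 1 = r by omega]
        exact h
      · rw [hoRot_ge (by omega), hoRot_ge (by omega)]
        exact L.1.path s h1 h2

def hoRev (n s : ℕ) : ℕ := if 1 ≤ s ∧ s ≤ n then n + 1 - s else s

theorem hoRev_eq {n s : ℕ} (h : 1 ≤ s) (h' : s ≤ n) : hoRev n s = n + 1 - s := if_pos ⟨h, h'⟩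

theorem ho_rev {V : Type*} {G : SimpleGraph V} {n : ℕ} {A : ℕ → ℕ → Prop} (L : HOLab G n A) :
    HOLab G n (fun s t => A (hoRev n s) (hoRev n t)) := by
  apply ho_trans L
  · intro s; unfold hoRev; split_ifs <;> omega
  · intro s h1 h2; unfold hoRev; split_ifs <;> omega
  · intro s h1 h2
    rw [hoRev_eq h1 (by omega), hoRev_eq (by omega) (by omega)]
    have := L.1.path (n + 1 - (s + 1)) (by omega) (by omega)
    rw [show n + 1 - (s + 1) + 1 = n + 1 - s by omega] at this
    exact L.1.symm _ _ this

theorem ho_ham {V : Type*} [Fintype V] {G : SimpleGraph V} {n : ℕ} {A : ℕ → ℕ → Prop}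
    (L : HOLab G n A) (hn : 3 ≤ n) (h : A 1 n) : HOGood G := by
  obtain ⟨a, h1, h2, h3⟩ := ho_one_ex L.1 hn n
  have hr := L.1.rng _ _ h1
  obtain ⟨i, j, q1, q2, q3⟩ := ho_min _ 1 a le_rfl (by omega) h1
  have hij := q3.1
  refine ho_cert L hn 0 i j (n + 1) n 1 n 0 (fun s => i ≤ s ∧ s ≤ j) (fun _ => False) ?_ (by omega)
    (by omega) (ho_cyc1 L.1 q3) (Or.inl (fun _ h => h)) (fun _ _ h => h) (fun _ _ _ h => h.elim)
    ?_ (by omega) ?_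
  · intro s; rw [or_false]; omega
  · intro h'; exact ⟨by omega, by omega, h, by omega, by omega, fun _ => rfl⟩
  · intro _; exact ⟨h, rfl, fun _ => ⟨rfl, rfl⟩⟩

theorem ho_ch_mono {A : ℕ → ℕ → Prop} {lo hi lo' hi' : ℕ} (h : HOCh A lo hi) (h1 : lo' ≤ lo)
    (h2 : hi ≤ hi') : HOCh A lo' hi' := by
  obtain ⟨s, t, q1, q2, q3, q4⟩ := h
  exact ⟨s, t, by omega, q2, by omega, q4⟩

theorem ho_F {V : Type*} [Fintype V] {G : SimpleGraph V} {n : ℕ} {A : ℕ → ℕ → Prop}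
    (L : HOLab G n A) (hn : 3 ≤ n) (hng : ¬ HOGood G) {b c lo hi : ℕ} (hb : A 1 b) (hc : A n c)
    (hb1 : lo < b) (hb2 : b < hi) (hc1 : lo < c) (hc2 : c < hi) (h1 : HOCh A 1 lo)
    (h2 : HOCh A hi n) : ∃ x y, 1 ≤ x ∧ x ≤ lo ∧ hi ≤ y ∧ y ≤ n ∧ A x y ∧
      (∀ s t, 1 ≤ s → s + 2 ≤ t → t ≤ lo → A s t → s < x ∧ x < t) ∧
      (∀ s t, hi ≤ s → s + 2 ≤ t → t ≤ n → A s t → s < y ∧ y < t) ∧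
      (∀ s t, s ≤ lo → hi ≤ t → A s t → s = x ∧ t = y) := by
  have P := L.1
  have hlo : 3 ≤ lo := by obtain ⟨s, t, q⟩ := h1; omega
  have hhi : hi + 2 ≤ n := by obtain ⟨s, t, q⟩ := h2; omega
  -- endpoints
  have eL : ∀ s t s' t', s ≤ lo → hi ≤ t → A s t → 1 ≤ s' → s' + 2 ≤ t' → t' ≤ lo → A s' t' →
      s ≠ s' ∧ s ≠ t' := by
    intro s t s' t' a1 a2 a3 a4 a5 a6 a7
    have r := P.rng _ _ a3
    constructor
    · rintro rfl
      by_cases h : s = 1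
      · subst h
        have := ho_one P hn hb a7 a3 (by omega) (by omega) (by omega)
        omega
      · have := ho_third P (by omega) (by omega) a3 a7 (by omega) (by omega) (by omega) (by omega)
        omega
    · rintro rfl
      have := ho_third P (by omega) (by omega) a3 (P.symm _ _ a7) (by omega) (by omega) (by omega)
        (by omega)
      omega
  have hn1 : A n (n - 1) := by
    have := P.path (n - 1) (by omega) (by omega)
    rw [show n - 1 + 1 = n by omega] at this
    exact P.symm _ _ this
  have eR : ∀ s t s' t', s ≤ lo → hi ≤ t → A s t → hi ≤ s' → s' + 2 ≤ t' → t' ≤ n → A s' t' →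
      t ≠ s' ∧ t ≠ t' := by
    intro s t s' t' a1 a2 a3 a4 a5 a6 a7
    have r := P.rng _ _ a3
    constructor
    · rintro rfl
      have := ho_third P (by omega) (by omega) (P.symm _ _ a3) a7 (by omega) (by omega) (by omega)
        (by omega)
      omega
    · rintro rfl
      by_cases h : t = n
      · rw [h] at a3 a7
        have := P.deg n (n - 1) c s' s hn1 hc (P.symm _ _ a7) (P.symm _ _ a3) (by omega) (by omega)
          (by omega)
        omega
      · have := ho_third P (by omega) (by omega) (P.symm _ _ a3) (P.symm _ _ a7) (by omega)
          (by omega) (by omega) (by omega)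
        omega
  have uL : ∀ s t t', s ≤ lo → hi ≤ t → hi ≤ t' → A s t → A s t' → t = t' := by
    intro s t t' a1 a2 a3 a4 a5
    have r := P.rng _ _ a4
    by_cases h : s = 1
    · subst h
      have := ho_one P hn hb a4 a5 (by omega) (by omega) (by omega)
      omega
    · exact ho_third P (by omega) (by omega) a4 a5 (by omega) (by omega) (by omega) (by omega)
  have uR : ∀ s s' t, s ≤ lo → s' ≤ lo → hi ≤ t → A s t → A s' t → s = s' := by
    intro s s' t a1 a2 a3 a4 a5
    have r := P.rng _ _ a4
    by_cases h : t = n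
    · rw [h] at a4 a5
      have := P.deg n (n - 1) c s s' hn1 hc (P.symm _ _ a4) (P.symm _ _ a5) (by omega) (by omega)
        (by omega)
      omega
    · exact ho_third P (by omega) (by omega) (P.symm _ _ a4) (P.symm _ _ a5) (by omega) (by omega)
        (by omega) (by omega)
  -- Claim A
  have cA : ∀ i j k l, 1 ≤ i → j ≤ lo → hi ≤ k → l ≤ n → HOMin A i j → HOMin A k l →
      ∃ s t, i < s ∧ s < j ∧ k < t ∧ t < l ∧ A s t := by
    intro i j k l a1 a2 a3 a4 a5 a6
    have b5 := a5.1
    have b6 := a6.1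
    by_contra hcon
    apply hng
    refine ho_cert L hn 0 i j k l 1 b c (fun s => i ≤ s ∧ s ≤ j) (fun s => k ≤ s ∧ s ≤ l) ?_
      (by omega) (by omega) (ho_cyc1 P a5) (Or.inr (ho_cyc1 P a6)) ?_ ?_ ?_ ?_ (by omega)
    · intro s; omega
    · intro s q1 q2; omega
    · intro s t q1 q2 q3
      apply hcon
      have z1 := eL s t i j (by omega) (by omega) q3 a1 b5 a2 a5.2.1
      have z2 := eR s t k l (by omega) (by omega) q3 a3 b6 a4 a6.2.1
      exact ⟨s, t, by omega, by omega, by omega, by omega, q3⟩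
    · intro _; exact ⟨by omega, by omega, hb, by omega, by omega, fun _ => rfl⟩
    · intro _; exact ⟨hc, by omega, by omega⟩
  -- Claim B
  have cB : ∀ d s s' t t', s' - s ≤ d → s < s' → s' ≤ lo → hi ≤ t → hi ≤ t' → A s t → A s' t' →
      HOCh A s s' ∨ HOCh A (min t t') (max t t') := by
    intro d
    induction d with
    | zero => intro s s' t t' a1 a2; omega
    | succ d ih =>
      intro s s' t t' a1 a2 a3 a4 a5 a6 a7
      by_contra hcon
      rw [not_or] at hcon
      obtain ⟨n1, n2⟩ := hcon
      have r1 := P.rng _ _ a6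
      have r2 := P.rng _ _ a7
      have htt : t ≠ t' := by
        rintro rfl
        have := uR s s' t (by omega) a3 a4 a6 a7
        omega
      have only : ∀ p q, s ≤ p → p ≤ s' → min t t' ≤ q → q ≤ max t t' → A p q →
          (p = s ∧ q = t) ∨ (p = s' ∧ q = t') := by
        intro p q b1 b2 b3 b4 b5
        by_cases g1 : p = s
        · subst g1
          exact Or.inl ⟨rfl, uL _ _ _ (by omega) (by omega) a4 b5 a6⟩
        by_cases g2 : p = s'
        · subst g2
          exact Or.inr ⟨rfl, uL _ _ _ (by omega) (by omega) a5 b5 a7⟩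
        exfalso
        rcases ih s p t q (by omega) (by omega) (by omega) a4 (by omega) a6 b5 with h | h
        · exact n1 (ho_ch_mono h le_rfl b2)
        · exact n2 (ho_ch_mono h (by omega) (by omega))
      apply hng
      have cyc : HOCyc A (fun p => (s ≤ p ∧ p ≤ s') ∨ (min t t' ≤ p ∧ p ≤ max t t')) := by
        rcases lt_or_gt_of_ne htt with h | h
        · rw [min_eq_left h.le, max_eq_right h.le] at *
          exact ho_cyc2' P a2.le (by omega) h.le (by omega) n1 n2 a6 a7
            (fun p q b1 b2 b3 b4 b5 => only p q b1 b2 b3 b4 b5)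
        · rw [min_eq_right h.le, max_eq_left h.le] at *
          exact ho_cyc2 P a2.le (by omega) h.le (by omega) n1 n2 a6 a7
            (fun p q b1 b2 b3 b4 b5 => only p q b1 b2 b3 b4 b5)
      refine ho_cert L hn 0 s s' (min t t') (max t t') 1 b c _ (fun _ => False) ?_
        (by omega) (by omega) cyc (Or.inl (fun _ h => h)) (fun _ _ h => h) (fun _ _ _ h => h.elim)
        ?_ ?_ (by omega)
      · intro p; rw [or_false]; omega
      · intro _; exact ⟨by omega, by omega, hb, by omega, by omega, fun _ => rfl⟩
      · intro _; exact ⟨hc, by omega, by omega⟩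
  have cB' := fun s s' t t' => cB _ s s' t t' le_rfl
  clear cB
  -- Claim U
  have cU : ∀ k l, hi ≤ k → l ≤ n → HOMin A k l → ∀ d s s' t t', s' - s ≤ d → s < s' → s' ≤ lo →
      k ≤ t → t ≤ l → k ≤ t' → t' ≤ l → A s t → A s' t' → False := by
    intro k l a1 a2 a3 d
    induction d with
    | zero => intro s s' t t' b1 b2; omega
    | succ d ih =>
      intro s s' t t' b1 b2 b3 b4 b5 b6 b7 b8 b9
      have r := P.rng _ _ b8
      have z1 := eR s t k l (by omega) (by omega) b8 a1 a3.1 a2 a3.2.1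
      have z2 := eR s' t' k l (by omega) (by omega) b9 a1 a3.1 a2 a3.2.1
      rcases cB' s s' t t' b2 b3 (by omega) (by omega) b8 b9 with h | h
      · obtain ⟨i, j, q1, q2, q3⟩ := ho_ch_min h
        obtain ⟨s2, t2, w1, w2, w3, w4, w5⟩ := cA i j k l (by omega) (by omega) a1 a2 q3 a3
        exact ih s s2 t t2 (by omega) (by omega) (by omega) b4 b5 w3.le w4.le b8 w5
      · obtain ⟨p, q, q1, q2, q3, q4⟩ := h
        have := a3.2.2 p q (by omega) q2 (by omega) q4
        omega
  obtain ⟨i0, j0, i1, i2, i3⟩ := ho_ch_min h1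
  obtain ⟨k0, l0, k1, k2, k3⟩ := ho_ch_min h2
  obtain ⟨x, y, x1, x2, y1, y2, hxy⟩ := cA i0 j0 k0 l0 i1 i2 k1 k2 i3 k3
  have hQ1 : ∀ s t, 1 ≤ s → s + 2 ≤ t → t ≤ lo → A s t → s < x ∧ x < t := by
    intro s t a1 a2 a3 a4
    obtain ⟨i, j, q1, q2, q3⟩ := ho_min _ s t le_rfl a2 a4
    obtain ⟨s2, t2, w1, w2, w3, w4, w5⟩ := cA i j k0 l0 (by omega) (by omega) k1 k2 q3 k3
    have : s2 = x := by
      rcases lt_trichotomy s2 x with h | h | h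
      · exact (cU k0 l0 k1 k2 k3 _ s2 x t2 y le_rfl h (by omega) w3.le w4.le y1.le y2.le w5 hxy).elim
      · exact h
      · exact (cU k0 l0 k1 k2 k3 _ x s2 y t2 le_rfl h (by omega) y1.le y2.le w3.le w4.le hxy w5).elim
    omega
  have cC : ∀ d s t, max t y - min t y ≤ d → t ≠ y → s ≤ lo → hi ≤ t → A s t → False := by
    intro d
    induction d with
    | zero => intro s t b1 b2; omega
    | succ d ih =>
      intro s t b1 b2 b3 b4 b5
      have r := P.rng _ _ b5
      have hsx : s ≠ x := by
        rintro rfl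
        exact b2 (uL s t y b3 b4 (by omega) b5 hxy)
      have hch : HOCh A (min t y) (max t y) := by
        rcases lt_or_gt_of_ne hsx with h | h
        · rcases cB' s x t y h (by omega) b4 (by omega) b5 hxy with h' | h'
          · obtain ⟨p, q, q1, q2, q3, q4⟩ := h'
            have := hQ1 p q (by omega) q2 (by omega) q4
            omega
          · exact h'
        · rcases cB' x s y t h (by omega) (by omega) b4 hxy b5 with h' | h'
          · obtain ⟨p, q, q1, q2, q3, q4⟩ := h'
            have := hQ1 p q (by omega) q2 (by omega) q4
            omega
          · rwa [min_comm, max_comm]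
      obtain ⟨k, l, q1, q2, q3⟩ := ho_ch_min hch
      have hk := P.rng _ _ q3.2.1
      obtain ⟨s2, t2, w1, w2, w3, w4, w5⟩ := cA i0 j0 k l i1 i2 (by omega) (by omega) i3 q3
      exact ih s2 t2 (by omega) (by omega) (by omega) (by omega) w5
  have honly : ∀ s t, s ≤ lo → hi ≤ t → A s t → s = x ∧ t = y := by
    intro s t a1 a2 a3
    have : t = y := by
      by_contra h
      exact cC _ s t le_rfl h a1 a2 a3
    subst this
    exact ⟨uR _ _ _ a1 (by omega) a2 a3 hxy, rfl⟩
  refine ⟨x, y, by omega, by omega, by omega, by omega, hxy, hQ1, ?_, honly⟩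
  intro s t a1 a2 a3 a4
  obtain ⟨k, l, q1, q2, q3⟩ := ho_min _ s t le_rfl a2 a4
  obtain ⟨s2, t2, w1, w2, w3, w4, w5⟩ := cA i0 j0 k l i1 i2 (by omega) (by omega) i3 q3
  have := honly s2 t2 (by omega) (by omega) w5
  omega

theorem ho_corner {V : Type*} [Fintype V] {G : SimpleGraph V} {n : ℕ} {A : ℕ → ℕ → Prop}
    (L : HOLab G n A) (hn : 3 ≤ n) {b c x y : ℕ} (hb : A 1 b) (hc : A n c)
    (h1 : 1 < c) (h2 : c + 1 < b) (h3 : b < n) (x1 : 1 ≤ x) (x2 : x < c) (y1 : b < y) (y2 : y ≤ n)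
    (hxy : A x y) (n1 : ¬ HOCh A 1 x) (n2 : ¬ HOCh A (b + 1) y)
    (ho : ∀ s t, 1 ≤ s → s ≤ x → b + 1 ≤ t → t ≤ y → A s t → s = x ∧ t = y) : HOGood G := by
  have P := L.1
  have n3 : ¬ HOCh A b y := by
    rintro ⟨s, t, q1, q2, q3, q4⟩
    by_cases h : s = b
    · subst h
      have := ho_third P (by omega) (by omega) (P.symm _ _ hb) q4 (by omega) (by omega) (by omega)
        (by omega)
      omega
    · exact n2 ⟨s, t, by omega, q2, q3, q4⟩
  have cyc := ho_cyc2' P x1 (by omega) y1.le (by omega) n1 n3 hb hxy (by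
    intro s t a1 a2 a3 a4 a5
    by_cases h : t = b
    · subst h
      have := ho_third P (by omega) (by omega) (P.symm _ _ hb) (P.symm _ _ a5) (by omega) (by omega)
        (by omega) (by omega)
      omega
    · exact Or.inr (ho s t a1 a2 (by omega) a4 a5))
  refine ho_cert L hn 0 1 x b y 0 0 c _ (fun _ => False) ?_
    (by omega) (by omega) cyc (Or.inl (fun _ h => h)) (fun _ _ h => h) (fun _ _ _ h => h.elim)
    (by omega) ?_ (by omega)
  · intro p; rw [or_false]; omega
  · intro _; exact ⟨hc, by omega, by omega⟩

theorem ho_thetacore {V : Type*} [Fintype V] {G : SimpleGraph V} {n : ℕ} {A : ℕ → ℕ → Prop}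
    (L : HOLab G n A) (hn : 3 ≤ n) {b c : ℕ} (hb : A 1 b) (hc : A n c)
    (h1 : 1 < c) (h2 : c + 1 < b) (h3 : b < n) (hiff : HOCh A 1 (c - 1) ↔ HOCh A (b + 1) n) :
    HOGood G := by
  by_contra hng
  have P := L.1
  by_cases hch : HOCh A 1 (c - 1)
  · obtain ⟨x, y, x1, x2, y1, y2, hxy, hq1, hq2, ho⟩ := ho_F L hn hng hb hc (lo := c - 1)
      (hi := b + 1) (by omega) (by omega) (by omega) (by omega) hch (hiff.1 hch)
    refine hng (ho_corner L hn hb hc h1 h2 h3 x1 (by omega) (by omega) y2 hxy ?_ ?_ ?_)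
    · rintro ⟨s, t, q1, q2, q3, q4⟩
      have := hq1 s t q1 q2 (by omega) q4
      omega
    · rintro ⟨s, t, q1, q2, q3, q4⟩
      have := hq2 s t q1 q2 (by omega) q4
      omega
    · intro s t a1 a2 a3 a4 a5
      exact ho s t (by omega) (by omega) a5
  · have hch' : ¬ HOCh A (b + 1) n := fun h => hch (hiff.2 h)
    by_cases hex : ∃ m x y, x + y = m ∧ 1 ≤ x ∧ x < c ∧ b < y ∧ y ≤ n ∧ A x y
    · classical
      obtain ⟨x, y, hm, x1, x2, y1, y2, hxy⟩ := Nat.find_spec hex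
      have hmin : ∀ s t, 1 ≤ s → s < c → b < t → t ≤ n → A s t → x + y ≤ s + t := by
        intro s t a1 a2 a3 a4 a5
        rw [hm]
        exact Nat.find_min' hex ⟨s, t, rfl, a1, a2, a3, a4, a5⟩
      refine hng (ho_corner L hn hb hc h1 h2 h3 x1 x2 y1 y2 hxy ?_ ?_ ?_)
      · intro h; exact hch (ho_ch_mono h le_rfl (by omega))
      · intro h; exact hch' (ho_ch_mono h le_rfl y2)
      · intro s t a1 a2 a3 a4 a5
        have := hmin s t a1 (by omega) (by omega) (by omega) a5
        omega
    · have hno : ∀ s t, 1 ≤ s → s < c → b < t → t ≤ n → ¬ A s t := by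
        intro s t a1 a2 a3 a4 a5
        exact hex ⟨_, s, t, rfl, a1, a2, a3, a4, a5⟩
      have n1 : ¬ HOCh A 1 c := by
        rintro ⟨s, t, q1, q2, q3, q4⟩
        by_cases h : t = c
        · subst h
          have := ho_third P (by omega) (by omega) (P.symm _ _ hc) (P.symm _ _ q4) (by omega)
            (by omega) (by omega) (by omega)
          omega
        · exact hch ⟨s, t, q1, q2, by omega, q4⟩
      have n2 : ¬ HOCh A b n := by
        rintro ⟨s, t, q1, q2, q3, q4⟩
        by_cases h : s = b
        · subst h
          have := ho_third P (by omega) (by omega) (P.symm _ _ hb) q4 (by omega) (by omega)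
            (by omega) (by omega)
          omega
        · exact hch' ⟨s, t, by omega, q2, q3, q4⟩
      have cyc := ho_cyc2' P h1.le h2 h3.le (by omega) n1 n2 hb (P.symm _ _ hc) (by
        intro s t a1 a2 a3 a4 a5
        by_cases h : t = b
        · subst h
          have := ho_third P (by omega) (by omega) (P.symm _ _ hb) (P.symm _ _ a5) (by omega)
            (by omega) (by omega) (by omega)
          omega
        by_cases h' : s = c
        · subst h'
          have := ho_third P (by omega) (by omega) (P.symm _ _ hc) a5 (by omega)
            (by omega) (by omega) (by omega)
          omega
        exact (hno s t a1 (by omega) (by omega) a4 a5).elim)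
      apply hng
      refine ho_cert L hn 0 1 c b n 0 0 0 _ (fun _ => False) ?_
        (by omega) (by omega) cyc (Or.inl (fun _ h => h)) (fun _ _ h => h) (fun _ _ _ h => h.elim)
        (by omega) (by omega) (by omega)
      intro p; rw [or_false]; omega

theorem ho_ch_refl {A A' : ℕ → ℕ → Prop} (hs : ∀ s t, A s t → A t s) (K lo hi : ℕ) (hK : hi ≤ K)
    (h : ∀ s t, lo ≤ s → s ≤ hi → lo ≤ t → t ≤ hi → (A' s t ↔ A (K - s) (K - t))) :
    HOCh A' lo hi ↔ HOCh A (K - hi) (K - lo) := by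
  constructor
  · rintro ⟨s, t, q1, q2, q3, q4⟩
    exact ⟨K - t, K - s, by omega, by omega, by omega,
      hs _ _ ((h s t (by omega) (by omega) (by omega) (by omega)).1 q4)⟩
  · rintro ⟨s, t, q1, q2, q3, q4⟩
    refine ⟨K - t, K - s, by omega, by omega, by omega, ?_⟩
    rw [h _ _ (by omega) (by omega) (by omega) (by omega), show K - (K - t) = t by omega,
      show K - (K - s) = s by omega]
    exact hs _ _ q4

theorem ho_thetahalf {V : Type*} [Fintype V] {G : SimpleGraph V} {n : ℕ} {A : ℕ → ℕ → Prop}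
    (L : HOLab G n A) (hn : 3 ≤ n) {b c : ℕ} (hb : A 1 b) (hc : A n c)
    (h1 : 1 < c) (h2 : c + 1 < b) (h3 : b < n)
    (hiff : HOCh A (c + 1) (b - 1) ↔ HOCh A (b + 1) n) : HOGood G := by
  have P := L.1
  have L' := ho_rot L hb (by omega)
  refine ho_thetacore L' hn (b := b) (c := b - c) ?_ ?_ (by omega) (by omega) h3 ?_
  · rw [hoRot_lt (by omega) (by omega), hoRot_ge le_rfl]
    have := P.path (b - 1) (by omega) (by omega)
    rwa [show b - 1 + 1 = b by omega] at this
  · rw [hoRot_ge (by omega), hoRot_lt (by omega) (by omega), show b - (b - c) = c by omega]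
    exact hc
  · rw [ho_ch_refl P.symm b 1 (b - c - 1) (by omega) (by
      intro s t a1 a2 a3 a4
      rw [hoRot_lt (by omega) (by omega), hoRot_lt (by omega) (by omega)]),
      show b - (b - c - 1) = c + 1 by omega, hiff]
    constructor
    · rintro ⟨s, t, q1, q2, q3, q4⟩
      exact ⟨s, t, q1, q2, q3, by simp only; rwa [hoRot_ge (by omega), hoRot_ge (by omega)]⟩
    · rintro ⟨s, t, q1, q2, q3, q4⟩
      exact ⟨s, t, q1, q2, q3, by rwa [hoRot_ge (by omega), hoRot_ge (by omega)] at q4⟩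

theorem ho_theta {V : Type*} [Fintype V] {G : SimpleGraph V} {n : ℕ} {A : ℕ → ℕ → Prop}
    (L : HOLab G n A) (hn : 3 ≤ n) {b c : ℕ} (hb : A 1 b) (hc : A n c) (h : c < b) :
    HOGood G := by
  have P := L.1
  have r1 := P.rng _ _ hb
  have r2 := P.rng _ _ hc
  by_cases c1 : c = 1
  · subst c1; exact ho_ham L hn (P.symm _ _ hc)
  by_cases c2 : b = n
  · rw [c2] at hb; exact ho_ham L hn hb
  by_cases c3 : b = c + 1
  · apply ho_ham (ho_rot L hb (by omega)) hn
    rw [hoRot_lt (by omega) (by omega), hoRot_ge (by omega), show b - 1 = c by omega]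
    exact P.symm _ _ hc
  by_cases e1 : HOCh A 1 (c - 1) ↔ HOCh A (b + 1) n
  · exact ho_thetacore L hn hb hc (by omega) (by omega) (by omega) e1
  by_cases e2 : HOCh A (c + 1) (b - 1) ↔ HOCh A (b + 1) n
  · exact ho_thetahalf L hn hb hc (by omega) (by omega) (by omega) e2
  have e3 : HOCh A (c + 1) (b - 1) ↔ HOCh A 1 (c - 1) := by tauto
  have L' := ho_rev L
  refine ho_thetahalf L' hn (b := n + 1 - c) (c := n + 1 - b) ?_ ?_ (by omega) (by omega) (by omega)
    ?_
  · rw [hoRev_eq (by omega) (by omega), hoRev_eq (by omega) (by omega),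
      show n + 1 - 1 = n by omega, show n + 1 - (n + 1 - c) = c by omega]
    exact hc
  · rw [hoRev_eq (by omega) (by omega), hoRev_eq (by omega) (by omega),
      show n + 1 - n = 1 by omega, show n + 1 - (n + 1 - b) = b by omega]
    exact hb
  · have key : ∀ s t, 1 ≤ s → s ≤ n → 1 ≤ t → t ≤ n →
        (A (hoRev n s) (hoRev n t) ↔ A (n + 1 - s) (n + 1 - t)) := by
      intro s t a1 a2 a3 a4
      rw [hoRev_eq a1 a2, hoRev_eq a3 a4]
    rw [ho_ch_refl P.symm (n + 1) _ _ (by omega) (fun s t a1 a2 a3 a4 =>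
      key s t (by omega) (by omega) (by omega) (by omega)),
      ho_ch_refl P.symm (n + 1) _ _ (by omega) (fun s t a1 a2 a3 a4 =>
      key s t (by omega) (by omega) (by omega) (by omega)),
      show n + 1 - (n + 1 - c - 1) = c + 1 by omega, show n + 1 - (n + 1 - b + 1) = b - 1 by omega,
      show n + 1 - n = 1 by omega, show n + 1 - (n + 1 - c + 1) = c - 1 by omega]
    exact e3

theorem ho_bar {V : Type*} [Fintype V] {G : SimpleGraph V} {n : ℕ} {A : ℕ → ℕ → Prop}
    (L : HOLab G n A) (hn : 3 ≤ n) (hng : ¬ HOGood G) {a b c d : ℕ} (ha : A 1 a) (hb : A 1 b)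
    (hc : A n c) (hd : A n d) (a3 : 3 ≤ a) (hab : a < b) (hcd : c < d) (hdn : d + 2 ≤ n) :
    b < c ∧ ∃ x y, 1 < x ∧ x < a ∧ c < y ∧ y ≤ n ∧ A x y ∧
      (∀ s t, 1 ≤ s → s + 2 ≤ t → t < b → A s t → s < x ∧ x < t) ∧
      (∀ s t, s < b → c < t → A s t → s = x ∧ t = y) := by
  have P := L.1
  have h1 : ¬ c < b := fun h => hng (ho_theta L hn hb hc h)
  have h2 : b ≠ c := by
    rintro rfl
    have := ho_third P (by omega) (by omega) (P.symm _ _ hb) (P.symm _ _ hc) (by omega) (by omega)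
      (by omega) (by omega)
    omega
  obtain ⟨x, y, x1, x2, y1, y2, hxy, hq1, hq2, ho⟩ := ho_F L hn hng hb hc (lo := b - 1)
    (hi := c + 1) (by omega) (by omega) (by omega) (by omega)
    ⟨1, a, le_rfl, by omega, by omega, ha⟩ ⟨d, n, by omega, by omega, le_rfl, P.symm _ _ hd⟩
  have h3 := hq1 1 a le_rfl (by omega) (by omega) ha
  refine ⟨by omega, x, y, h3.1, h3.2, by omega, y2, hxy, ?_, ?_⟩
  · intro s t q1 q2 q3 q4; exact hq1 s t q1 q2 (by omega) q4
  · intro s t q1 q2 q4; exact ho s t (by omega) (by omega) q4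

theorem ho_barbell {V : Type*} [Fintype V] {G : SimpleGraph V} {n : ℕ} (hn : 3 ≤ n)
    (hng : ¬ HOGood G) : ∀ (N : ℕ) (A : ℕ → ℕ → Prop), HOLab G n A → ∀ a b c d x y : ℕ,
    A 1 a → A 1 b → A n c → A n d → 3 ≤ a → a < b → c < d → d + 2 ≤ n → A x y → x < b → c < y →
    x ≤ N → False := by
  intro N
  induction N with
  | zero =>
    intro A L a b c d x y _ _ _ _ _ _ _ _ hxy _ _ hx
    have := L.1.rng _ _ hxy
    omega
  | succ N ih =>
    intro A L a b c d x y ha hb hc hd a3 hab hcd hdn hxy hxb hcy hxN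
    have P := L.1
    obtain ⟨hbc, x0, y0, x1, xa, y1, y2, -, hq, ho⟩ := ho_bar L hn hng ha hb hc hd a3 hab hcd hdn
    obtain ⟨rfl, rfl⟩ := ho x y hxb hcy hxy
    have L' := ho_rot L ha a3
    have hc' : A (hoRot a n) (hoRot a c) := by rwa [hoRot_ge (by omega), hoRot_ge (by omega)]
    have hd' : A (hoRot a n) (hoRot a d) := by rwa [hoRot_ge (by omega), hoRot_ge (by omega)]
    have ha' : A (hoRot a 1) (hoRot a a) := by
      rw [hoRot_ge le_rfl, hoRot_lt le_rfl (by omega)]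
      have := P.path (a - 1) (by omega) (by omega)
      rwa [show a - 1 + 1 = a by omega] at this
    by_cases hxa : x = a - 1
    · apply hng
      refine ho_theta L' hn (b := y) (c := c) ?_ hc' hcy
      rw [hoRot_lt le_rfl (by omega), hoRot_ge (by omega), ← hxa]
      exact hxy
    obtain ⟨z, hz, hz2⟩ := ho_third_ex P (s := a - 1) (by omega) (by omega)
    have hzr := P.rng _ _ hz
    have b1 : ∀ u, A u b → u + 2 ≤ b → u = 1 := by
      intro u hu hu'
      exact ho_third P (by omega) (by omega) (P.symm _ _ hu) (P.symm _ _ hb) (by omega) (by omega)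
        (by omega) (by omega)
    have cn : ∀ u, A u c → u + 2 ≤ c → u = n := by
      intro u hu hu'
      exact ho_third P (by omega) (by omega) (P.symm _ _ hu) (P.symm _ _ hc) (by omega) (by omega)
        (by omega) (by omega)
    have hzx : 2 ≤ z ∧ z < x := by
      rcases hz2 with h | h
      · have := hq z (a - 1) (by omega) h (by omega) (P.symm _ _ hz)
        refine ⟨?_, this.1⟩
        by_contra h1
        have e : z = 1 := by omega
        rw [e] at hz
        have := ho_one P hn ha hb (P.symm _ _ hz) a3 (by omega) (by omega)
        omega
      · exfalso
        rcases lt_trichotomy z b with h' | h' | h'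
        · have := hq (a - 1) z (by omega) h (by omega) hz
          omega
        · rw [h'] at hz
          have := b1 _ hz (by omega)
          omega
        · rcases lt_trichotomy z c with h2 | h2 | h2
          · have hz' : A (hoRot a 1) (hoRot a z) := by
              rwa [hoRot_lt le_rfl (by omega), hoRot_ge (by omega)]
            obtain ⟨-, x', y', -, xa', -, -, -, hq', -⟩ := ho_bar L' hn hng ha' hz' hc' hd' a3
              (by omega) hcd hdn
            have := hq' (a - 1) b (by omega) (by omega) h' (by
              rw [hoRot_lt (by omega) (by omega), hoRot_ge (by omega),
                show a - (a - 1) = 1 by omega]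
              exact hb)
            omega
          · rw [h2] at hz
            have := cn _ hz (by omega)
            omega
          · have := ho _ _ (by omega) h2 hz
            omega
    have hza : z + 2 ≤ a - 1 := by omega
    by_cases hsm : a - x < x
    · refine ih _ L' (a - z) a c d (a - x) y ?_ ha' hc' hd' (by omega) (by omega) hcd hdn ?_
        (by omega) hcy (by omega)
      · rw [hoRot_lt le_rfl (by omega), hoRot_lt (by omega) (by omega),
          show a - (a - z) = z by omega]
        exact hz
      · rw [hoRot_lt (by omega) (by omega), hoRot_ge (by omega), show a - (a - x) = x by omega]
        exact hxy
    have hu : ∃ u w, x < u ∧ u < a ∧ b < w ∧ w < c ∧ A u w := by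
      by_contra hcon
      have hf : ∀ u, ∃ t, x < u → u < a → (A u t ∧ 2 ≤ t ∧ t < x) := by
        intro u
        by_cases hu : x < u ∧ u < a
        swap
        · exact ⟨0, fun h h' => absurd ⟨h, h'⟩ hu⟩
        obtain ⟨u1, u2⟩ := hu
        obtain ⟨t, ht, ht2⟩ := ho_third_ex P (s := u) (by omega) (by omega)
        have r := P.rng _ _ ht
        refine ⟨t, fun _ _ => ⟨ht, ?_⟩⟩
        rcases ht2 with h | h
        · have := hq t u (by omega) h (by omega) (P.symm _ _ ht)
          refine ⟨?_, this.1⟩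
          by_contra h1
          have e : t = 1 := by omega
          rw [e] at ht
          have := ho_one P hn ha hb (P.symm _ _ ht) a3 (by omega) (by omega)
          omega
        · exfalso
          rcases lt_trichotomy t b with h' | h' | h'
          · have := hq u t (by omega) h (by omega) ht
            omega
          · rw [h'] at ht
            have := b1 _ ht (by omega)
            omega
          · rcases lt_trichotomy t c with h2 | h2 | h2
            · exact hcon ⟨u, t, u1, u2, h', h2, ht⟩
            · rw [h2] at ht
              have := cn _ ht (by omega)
              omega
            · have := ho _ _ (by omega) h2 ht
              omega
      choose f hf using hf
      obtain ⟨u, hu, u', hu', huu, hff⟩ := Finset.exists_ne_map_eq_of_card_lt_of_maps_to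
        (s := Finset.Icc (x + 1) (a - 1)) (t := Finset.Icc 2 (x - 1)) (f := f)
        (by rw [Nat.card_Icc, Nat.card_Icc]; omega) (by
          intro u hu
          rw [Finset.mem_coe, Finset.mem_Icc] at hu ⊢
          have := hf u (by omega) (by omega)
          omega)
      rw [Finset.mem_Icc] at hu hu'
      have q1 := hf u (by omega) (by omega)
      have q2 := hf u' (by omega) (by omega)
      rw [← hff] at q2
      exact huu (ho_third P (by omega) (by omega) (P.symm _ _ q1.1) (P.symm _ _ q2.1) (by omega)
        (by omega) (by omega) (by omega))
    obtain ⟨u, w, u1, u2, w1, w2, huw⟩ := hu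
    have ua : u ≠ a - 1 := by
      rintro rfl
      have := ho_third P (by omega) (by omega) hz huw (by omega) (by omega) (by omega) (by omega)
      omega
    obtain ⟨k, l, k1, k2, k3⟩ := ho_min _ d n le_rfl hdn (P.symm _ _ hd)
    have k4 := k3.1
    have cyc := ho_cyc2 P (x := 1) (x' := z) (y := a - 1) (y' := a) (by omega) (by omega) (by omega)
      (by omega) (by
        rintro ⟨s, t, q1, q2, q3, q4⟩
        have := hq s t q1 q2 (by omega) q4
        omega) (by
        rintro ⟨s, t, q1, q2, q3, q4⟩
        omega) ha (P.symm _ _ hz) (by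
        intro s t q1 q2 q3 q4 q5
        by_cases h : t = a
        · subst h
          have := ho_third P (by omega) (by omega) (P.symm _ _ ha) (P.symm _ _ q5) (by omega)
            (by omega) (by omega) (by omega)
          omega
        · have e : t = a - 1 := by omega
          subst e
          have := ho_third P (by omega) (by omega) hz (P.symm _ _ q5) (by omega)
            (by omega) (by omega) (by omega)
          omega)
    apply hng
    refine ho_cert L hn z (a - 1) a k l u w c _ (fun s => k ≤ s ∧ s ≤ l) ?_ (by omega) (by omega)
      cyc (Or.inr (ho_cyc1 P k3)) ?_ ?_ ?_ ?_ (by omega)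
    · intro s; omega
    · intro s q1 q2; omega
    · intro s t q1 q2 q3
      have := ho s t (by omega) (by omega) q3
      omega
    · intro _; exact ⟨by omega, by omega, huw, by omega, by omega, by omega⟩
    · intro _; exact ⟨hc, by omega, by omega⟩

theorem ho_good_of_lab {V : Type*} [Fintype V] {G : SimpleGraph V} {n : ℕ} {A : ℕ → ℕ → Prop}
    (L : HOLab G n A) (hn : 3 ≤ n) : HOGood G := by
  by_contra hng
  have P := L.1
  obtain ⟨a, b, ha, hb, a3, hab⟩ : ∃ a b, A 1 a ∧ A 1 b ∧ 3 ≤ a ∧ a < b := by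
    obtain ⟨a, h1, h2, -⟩ := ho_one_ex P hn 0
    obtain ⟨b, h3, h4, h5⟩ := ho_one_ex P hn a
    rcases lt_or_gt_of_ne h5 with h | h
    · exact ⟨b, a, h3, h1, h4, h⟩
    · exact ⟨a, b, h1, h3, h2, h⟩
  obtain ⟨c, d, hc, hd, hcd, hdn⟩ : ∃ c d, A n c ∧ A n d ∧ c < d ∧ d + 2 ≤ n := by
    have aux : ∀ t, A n t → t ≠ n - 1 → t + 2 ≤ n := by
      intro t h1 h2
      have := P.rng _ _ h1
      have : t ≠ n := by rintro rfl; exact P.irr _ h1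
      omega
    obtain ⟨a, h1, h2, -⟩ := P.ex n (by omega) le_rfl (n - 1) 0
    obtain ⟨b, h3, h4, h5⟩ := P.ex n (by omega) le_rfl (n - 1) a
    rcases lt_or_gt_of_ne h5 with h | h
    · exact ⟨b, a, h3, h1, h, aux _ h1 h2⟩
    · exact ⟨a, b, h1, h3, h, aux _ h3 h4⟩
  obtain ⟨hbc, x, y, x1, xa, y1, y2, hxy, -, -⟩ := ho_bar L hn hng ha hb hc hd a3 hab hcd hdn
  exact ho_barbell hn hng x A L a b c d x y ha hb hc hd a3 hab hcd hdn hxy (by omega) y1 le_rfl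

/-- Strengthened form for traceable cubic graphs: if `G` is a connected cubic
graph containing a Hamiltonian path, then the edge set of `G` can be
partitioned into the edge set of a spanning tree of `G`, the edge set of a
matching, and the edge set of a disjoint union of at most two cycles. -/
theorem hoffmann_ostenhof_traceable_two_cycles
    {V : Type*} [Fintype V] [DecidableEq V] (G : SimpleGraph V) [DecidableRel G.Adj]
    (hcubic : ∀ v : V, G.degree v = 3)
    (hconn : G.Connected)
    (htrace : ∃ (u v : V) (p : G.Walk u v), p.IsPath ∧ p.IsHamiltonian) :
    ∃ (T M C : Set (Sym2 V)),
      -- the three parts partition the edge set of `G`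
      T ∪ M ∪ C = G.edgeSet ∧
      Disjoint T M ∧ Disjoint T C ∧ Disjoint M C ∧
      -- `T` is the edge set of a spanning tree of `G`
      (SimpleGraph.fromEdgeSet T).IsTree ∧
      -- `M` is a matching: distinct edges of `M` share no vertex
      M.Pairwise (fun e f => ∀ v : V, v ∈ e → v ∉ f) ∧
      -- `C` is the edge set of a family of at most two vertex-disjoint cycles
      (∃ (ι : Type) (hι : Fintype ι) (x : ι → V)
          (w : ∀ i : ι, G.Walk (x i) (x i)),
        @Fintype.card ι hι ≤ 2 ∧
        (∀ i, (w i).IsCycle) ∧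
        (Pairwise fun i j => ∀ v : V, v ∈ (w i).support → v ∉ (w j).support) ∧
        C = ⋃ i, {e : Sym2 V | e ∈ (w i).edges}) := by
  have hne : HOGood G := by
    obtain ⟨u, v, p, hp, hH⟩ := htrace
    have hnd : p.support.Nodup := hp.support_nodup
    have hmem : ∀ v, v ∈ p.support := hH.mem_support
    have hlen : p.support.length = p.length + 1 := p.length_support
    have hget : ∀ k, k ≤ p.length → p.support.idxOf (p.getVert k) = k := by
      intro k hk
      rw [SimpleGraph.Walk.getVert_eq_support_getElem p hk]
      exact hnd.idxOf_getElem k _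
    have hlt : ∀ v, p.support.idxOf v < p.length + 1 := by
      intro v; rw [← hlen]; exact List.idxOf_lt_length_of_mem (hmem v)
    have hget' : ∀ v, p.getVert (p.support.idxOf v) = v := by
      intro v
      rw [SimpleGraph.Walk.getVert_eq_support_getElem p (by have := hlt v; omega)]
      exact List.getElem_idxOf _
    have hcard : Fintype.card V ≤ p.length + 1 := by
      have : Function.Injective (fun v => (⟨p.support.idxOf v, hlt v⟩ : Fin (p.length + 1))) := by
        intro a b h
        simp only [Fin.mk.injEq] at h
        rw [← hget' a, ← hget' b, h]
      simpa using Fintype.card_le_of_injective _ this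
    have h3 : 3 ≤ p.length + 1 := by
      have := G.degree_lt_card_verts u
      rw [hcubic] at this
      omega
    refine ho_good_of_lab (n := p.length + 1) (A := fun s t => (1 ≤ s ∧ s ≤ p.length + 1) ∧
      (1 ≤ t ∧ t ≤ p.length + 1) ∧ G.Adj (p.getVert (s - 1)) (p.getVert (t - 1))) ?_ h3
    have inj : ∀ a b, 1 ≤ a → a ≤ p.length + 1 → 1 ≤ b → b ≤ p.length + 1 →
        p.getVert (a - 1) = p.getVert (b - 1) → a = b := by
      intro a b h1 h2 h3 h4 h
      have := congrArg (p.support.idxOf) h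
      rw [hget _ (by omega), hget _ (by omega)] at this
      omega
    refine ⟨⟨?_, ?_, ?_, ?_, ?_, ?_⟩, fun s => p.getVert (s - 1), fun v => p.support.idxOf v + 1,
      ?_, ?_, ?_⟩
    · rintro s t ⟨h1, h2, h3⟩; exact ⟨h2, h1, h3.symm⟩
    · rintro s ⟨h1, h2, h3⟩; exact G.irrefl h3
    · rintro s t ⟨h1, h2, h3⟩; exact ⟨h1.1, h1.2, h2⟩
    · intro s h1 h2
      refine ⟨⟨h1, h2.le⟩, ⟨by omega, by omega⟩, ?_⟩
      have := p.adj_getVert_succ (i := s - 1) (by omega)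
      rwa [show s - 1 + 1 = s + 1 - 1 by omega] at this
    · rintro s a b c d ⟨-, a1, a2⟩ ⟨-, b1, b2⟩ ⟨-, c1, c2⟩ ⟨-, d1, d2⟩ hab hac hbc
      have e : ({p.getVert (a - 1), p.getVert (b - 1), p.getVert (c - 1)} : Finset V) =
          G.neighborFinset (p.getVert (s - 1)) := by
        apply Finset.eq_of_subset_of_card_le
        · intro v hv
          simp only [Finset.mem_insert, Finset.mem_singleton] at hv
          rw [SimpleGraph.mem_neighborFinset]
          rcases hv with rfl | rfl | rfl <;> assumption
        · rw [SimpleGraph.card_neighborFinset_eq_degree, hcubic, Finset.card_eq_three.2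
            ⟨_, _, _, fun h => hab (inj _ _ a1.1 a1.2 b1.1 b1.2 h),
              fun h => hac (inj _ _ a1.1 a1.2 c1.1 c1.2 h),
              fun h => hbc (inj _ _ b1.1 b1.2 c1.1 c1.2 h), rfl⟩]
      have hd : p.getVert (d - 1) ∈ G.neighborFinset (p.getVert (s - 1)) := by
        rw [SimpleGraph.mem_neighborFinset]; exact d2
      rw [← e] at hd
      simp only [Finset.mem_insert, Finset.mem_singleton] at hd
      rcases hd with h | h | h
      · exact Or.inl (inj _ _ d1.1 d1.2 a1.1 a1.2 h)
      · exact Or.inr (Or.inl (inj _ _ d1.1 d1.2 b1.1 b1.2 h))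
      · exact Or.inr (Or.inr (inj _ _ d1.1 d1.2 c1.1 c1.2 h))
    · intro s h1 h2 a b
      have : ∃ v ∈ G.neighborFinset (p.getVert (s - 1)),
          v ∉ ({p.getVert (a - 1), p.getVert (b - 1)} : Finset V) := by
        apply Finset.exists_mem_notMem_of_card_lt_card
        rw [SimpleGraph.card_neighborFinset_eq_degree, hcubic]
        have := Finset.card_le_two (a := p.getVert (a - 1)) (b := p.getVert (b - 1))
        omega
      obtain ⟨v, hv, hv'⟩ := this
      rw [SimpleGraph.mem_neighborFinset] at hv
      simp only [Finset.mem_insert, Finset.mem_singleton, not_or] at hv'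
      have hv1 := hlt v
      refine ⟨p.support.idxOf v + 1, ⟨⟨h1, h2⟩, ⟨by omega, by omega⟩, ?_⟩, ?_, ?_⟩
      · rw [Nat.add_sub_cancel, hget']; exact hv
      · rintro rfl
        rw [Nat.add_sub_cancel, hget'] at hv'
        exact hv'.1 rfl
      · rintro rfl
        rw [Nat.add_sub_cancel, hget'] at hv'
        exact hv'.2 rfl
    · intro s h1 h2
      show p.support.idxOf (p.getVert (s - 1)) + 1 = s
      rw [hget _ (by omega)]
      omega
    · intro v
      have := hlt v
      refine ⟨Nat.le_add_left _ _, this, ?_⟩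
      show p.getVert (p.support.idxOf v + 1 - 1) = v
      rw [Nat.add_sub_cancel, hget']
    · intro s t a b c d
      exact ⟨fun h => h.2.2, fun h => ⟨⟨a, b⟩, ⟨c, d⟩, h⟩⟩
  exact hne
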